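/- arXiv:2404.04529 — 2 statements merged into one kernel-verified Lean document; each statement's English description precedes it below -/
import Mathlib

section
/- The equivalence relation of topological isomorphism restricted to automorphism groups of countable ω-categorical structures with weak elimination of imaginaries is smooth; that is, there is a Borel map from the space of oligomorphic closed subgroups of Sym(ω) whose canonical structure has weak elimination of imaginaries to a standard Borel space such that two such groups are topologically isomorphic if and only if their images are equal. -/
namespace Paper

/-- The Polish group topology on `Sym(ω)` (pointwise convergence, refined so that
inversion is continuous; the open subgroups are the same). -/
instance permTopology : TopologicalSpace (Equiv.Perm ℕ) :=
  letI : TopologicalSpace ℕ := ⊥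
  TopologicalSpace.induced
    (fun g => ((g : ℕ → ℕ), ((g⁻¹ : Equiv.Perm ℕ) : ℕ → ℕ))) inferInstance

/-- The pointwise stabilizer of `A ⊆ ω` inside a subgroup `G ≤ Sym(ω)`. -/
def stabIn (G : Subgroup (Equiv.Perm ℕ)) (A : Set ℕ) : Subgroup G where
  carrier := {g | ∀ a ∈ A, (g : Equiv.Perm ℕ) a = a}
  one_mem' := fun a _ => rfl
  mul_mem' := by
    intro f g hf hg a ha
    have h1 := hg a ha
    have h2 := hf a ha
    simp only [Set.mem_setOf_eq, Subgroup.coe_mul, Equiv.Perm.coe_mul, Function.comp_apply]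
    rw [h1, h2]
  inv_mem' := by
    intro g hg a ha
    have h1 := hg a ha
    simp only [Set.mem_setOf_eq, InvMemClass.coe_inv]
    conv_lhs => rw [← h1]
    simp

/-- The setwise stabilizer of `A ⊆ ω` inside a subgroup `G ≤ Sym(ω)`. -/
def sstabIn (G : Subgroup (Equiv.Perm ℕ)) (A : Set ℕ) : Subgroup G where
  carrier := {g | (g : Equiv.Perm ℕ) '' A = A}
  one_mem' := by
    simp only [Set.mem_setOf_eq, OneMemClass.coe_one, Equiv.Perm.coe_one, Set.image_id]
  mul_mem' := by
    intro f g hf hg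
    simp only [Set.mem_setOf_eq, Subgroup.coe_mul, Equiv.Perm.coe_mul] at *
    rw [Set.image_comp, hg, hf]
  inv_mem' := by
    intro f hf
    simp only [Set.mem_setOf_eq, InvMemClass.coe_inv] at *
    conv_lhs => rw [← hf]
    rw [Set.image_image]
    ext a
    constructor
    · rintro ⟨x, hx, rfl⟩
      simpa using hx
    · intro ha
      exact ⟨a, ha, by simp⟩

/-- The Galois-algebraic closure of `A ⊆ ω` with respect to `G ≤ Sym(ω)`: the elements
whose orbit under the pointwise stabilizer of `A` in `G` is finite. -/
def aclIn (G : Subgroup (Equiv.Perm ℕ)) (A : Set ℕ) : Set ℕ :=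
  {b | (MulAction.orbit (stabIn G A) b).Finite}

/-- `G ≤ Sym(ω)` is oligomorphic: finitely many orbits on `ωⁿ` for every `n`. -/
def IsOligomorphic (G : Subgroup (Equiv.Perm ℕ)) : Prop :=
  ∀ n : ℕ, Finite (MulAction.orbitRel.Quotient G (Fin n → ℕ))

/-- Weak elimination of imaginaries for the canonical (ω-categorical) structure of
`G ≤ Sym(ω)`, phrased group-theoretically: every open subgroup of `G` lies between the
pointwise and the setwise stabilizer of a unique smallest finite Galois-algebraically
closed subset of `ω`. -/
def HasWEIgrp (G : Subgroup (Equiv.Perm ℕ)) : Prop :=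
  ∀ H : Subgroup G, IsOpen (H : Set G) →
    ∃ K : Set ℕ, (K.Finite ∧ aclIn G K = K ∧ stabIn G K ≤ H ∧ H ≤ sstabIn G K) ∧
      ∀ K' : Set ℕ,
        (K'.Finite ∧ aclIn G K' = K' ∧ stabIn G K' ≤ H ∧ H ≤ sstabIn G K') → K ⊆ K'

/-- The space of closed subgroups of `Sym(ω)`. -/
def ClosedSubgroups : Type :=
  {G : Subgroup (Equiv.Perm ℕ) // IsClosed (G : Set (Equiv.Perm ℕ))}

/-- The Effros Borel structure on the space of closed subgroups of `Sym(ω)`, generated by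
the sets `{F : F ∩ U ≠ ∅}` for `U` open. -/
instance effros : MeasurableSpace ClosedSubgroups :=
  MeasurableSpace.generateFrom
    {S | ∃ U : Set (Equiv.Perm ℕ), IsOpen U ∧
      S = {G : ClosedSubgroups | (((G.1 : Subgroup (Equiv.Perm ℕ)) : Set (Equiv.Perm ℕ)) ∩ U).Nonempty}}

/-- The Borel space of oligomorphic closed subgroups of `Sym(ω)` whose canonical
structure has weak elimination of imaginaries. -/
def OligWEISpace : Type :=
  {G : ClosedSubgroups // IsOligomorphic G.1 ∧ HasWEIgrp G.1}

instance : MeasurableSpace OligWEISpace := by unfold OligWEISpace; infer_instance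

/-- Topological isomorphism of two subgroups of `Sym(ω)`: a group isomorphism which is a
homeomorphism for the subspace topologies. -/
def TopIso (G H : Subgroup (Equiv.Perm ℕ)) : Prop :=
  ∃ e : G ≃* H, Continuous (e : G → H) ∧ Continuous (e.symm : H → G)

open Equiv (Perm)

/-! ### The topology of `Sym(ω)` -/

theorem exists_finset_of_isOpen {U : Set (Perm ℕ)} (hU : IsOpen U) {g : Perm ℕ} (hg : g ∈ U) :
    ∃ F : Finset ℕ, ∀ g' : Perm ℕ, (∀ a ∈ F, g' a = g a) → g' ∈ U := by
  obtain ⟨V, hV, rfl⟩ := isOpen_induced_iff.1 hU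
  obtain ⟨V₁, V₂, h₁, h₂, hg₁, hg₂, hsub⟩ := isOpen_prod_iff.1 hV _ _ hg
  obtain ⟨I, u, hu, hI⟩ := isOpen_pi_iff.1 h₁ _ hg₁
  obtain ⟨J, w, hw, hJ⟩ := isOpen_pi_iff.1 h₂ _ hg₂
  refine ⟨I ∪ J.image (g⁻¹ : Perm ℕ), fun g' hg' => hsub ⟨hI fun a ha => ?_, hJ fun a ha => ?_⟩⟩
  · change g' a ∈ u a
    rw [hg' a (Finset.mem_union_left _ ha)]
    exact (hu a ha).2
  · have h := hg' (g⁻¹ a) (Finset.mem_union_right _ (Finset.mem_image_of_mem _ ha))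
    have h' : (g'⁻¹ : Perm ℕ) a = (g⁻¹ : Perm ℕ) a := by
      rw [Equiv.Perm.inv_eq_iff_eq, h]
      simp
    change (g'⁻¹ : Perm ℕ) a ∈ w a
    rw [h']
    exact (hw a ha).2

theorem isOpen_apply_eq (a b : ℕ) : IsOpen {g : Perm ℕ | g a = b} := by
  refine isOpen_induced_iff.2 ⟨{p | p.1 a = b}, ?_, rfl⟩
  have h : Continuous fun p : (ℕ → ℕ) × (ℕ → ℕ) => p.1 a := by fun_prop
  exact (isOpen_discrete ({b} : Set ℕ)).preimage h

theorem isOpen_of_exists_finset {U : Set (Perm ℕ)}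
    (h : ∀ g ∈ U, ∃ F : Finset ℕ, ∀ g' : Perm ℕ, (∀ a ∈ F, g' a = g a) → g' ∈ U) :
    IsOpen U := by
  refine isOpen_iff_forall_mem_open.2 fun g hg => ?_
  obtain ⟨F, hF⟩ := h g hg
  refine ⟨⋂ a ∈ F, {g' : Perm ℕ | g' a = g a}, fun g' hg' => hF g' ?_,
    isOpen_biInter_finset fun a _ => isOpen_apply_eq a _, ?_⟩
  · simpa using hg'
  · simp

/-- A closed set contains every permutation that it approximates on all finite sets. -/
theorem mem_of_isClosed {C : Set (Perm ℕ)} (hC : IsClosed C) {g : Perm ℕ}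
    (h : ∀ F : Finset ℕ, ∃ g' ∈ C, ∀ a ∈ F, g' a = g a) : g ∈ C := by
  by_contra hg
  obtain ⟨F, hF⟩ := exists_finset_of_isOpen hC.isOpen_compl hg
  obtain ⟨g', hg', hFg⟩ := h F
  exact hF g' hFg hg'

theorem isOpen_subgroup_of_finset {G : Subgroup (Perm ℕ)} (H : Subgroup G) (F : Finset ℕ)
    (h : stabIn G F ≤ H) : IsOpen (H : Set G) := by
  refine isOpen_induced_iff.2 ⟨{g | ∃ u : H, ∀ a ∈ F, g a = (u : G).1 a}, ?_, ?_⟩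
  · refine isOpen_of_exists_finset fun g ⟨u, hu⟩ => ⟨F, fun g' hg' => ⟨u, fun a ha => ?_⟩⟩
    rw [hg' a ha, hu a ha]
  · ext g
    constructor
    · rintro ⟨u, hu⟩
      have : (u : G)⁻¹ * g ∈ H := h fun a ha => by
        simp [hu a ha]
      simpa using H.mul_mem u.2 this
    · exact fun hg => ⟨⟨g, hg⟩, fun _ _ => rfl⟩

/-! ### Finite algebraically closed sets -/

/-- The finite set `K` is algebraically closed with respect to `G`. -/
def AlgClosed (G : Subgroup (Perm ℕ)) (K : Finset ℕ) : Prop :=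
  aclIn G K = K

theorem mem_aclIn {G : Subgroup (Perm ℕ)} {A : Set ℕ} {b : ℕ} :
    b ∈ aclIn G A ↔ {c | ∃ g ∈ G, (∀ a ∈ A, g a = a) ∧ g b = c}.Finite := by
  have : MulAction.orbit (stabIn G A) b = {c | ∃ g ∈ G, (∀ a ∈ A, g a = a) ∧ g b = c} := by
    ext c
    constructor
    · rintro ⟨g, rfl⟩
      exact ⟨g.1.1, g.1.2, g.2, rfl⟩
    · rintro ⟨g, hg, hA, rfl⟩
      exact ⟨⟨⟨g, hg⟩, hA⟩, rfl⟩
  rw [← this]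
  rfl

theorem algClosed_iff {G : Subgroup (Perm ℕ)} {K : Finset ℕ} :
    AlgClosed G K ↔
      ∀ b, {c | ∃ g ∈ G, (∀ a ∈ K, g a = a) ∧ g b = c}.Finite → b ∈ K := by
  constructor
  · intro h b hb
    have : b ∈ aclIn G K := mem_aclIn.2 (by simpa using hb)
    rw [h] at this
    simpa using this
  · intro h
    refine Set.Subset.antisymm (fun b hb => h b (by simpa using mem_aclIn.1 hb)) fun b hb => ?_
    refine mem_aclIn.2 ((Set.finite_singleton b).subset ?_)
    rintro c ⟨g, -, hg, rfl⟩
    exact hg b hb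

theorem AlgClosed.inter {G : Subgroup (Perm ℕ)} {K L : Finset ℕ} (hK : AlgClosed G K)
    (hL : AlgClosed G L) : AlgClosed G (K ∩ L) := by
  refine algClosed_iff.2 fun b hb => Finset.mem_inter.2
    ⟨algClosed_iff.1 hK b (hb.subset ?_), algClosed_iff.1 hL b (hb.subset ?_)⟩
  all_goals
    rintro c ⟨g, hg, hA, rfl⟩
    exact ⟨g, hg, fun a ha => hA a (by simp at ha; tauto), rfl⟩

theorem AlgClosed.image {G : Subgroup (Perm ℕ)} {K : Finset ℕ} (hK : AlgClosed G K)
    {g : Perm ℕ} (hg : g ∈ G) : AlgClosed G (K.image g) := by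
  refine algClosed_iff.2 fun b hb => ?_
  have : g⁻¹ b ∈ K := by
    refine algClosed_iff.1 hK _ ((hb.image (g⁻¹ : Perm ℕ)).subset ?_)
    rintro c ⟨u, hu, hA, rfl⟩
    refine ⟨_, ⟨g * u * g⁻¹, G.mul_mem (G.mul_mem hg hu) (G.inv_mem hg), fun a ha => ?_, rfl⟩,
      by simp⟩
    obtain ⟨x, hx, rfl⟩ := Finset.mem_image.1 ha
    simp [hA x hx]
  exact Finset.mem_image.2 ⟨_, this, by simp⟩

/-- Pointwise stabilizers of finite algebraically closed sets determine the sets. -/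
theorem AlgClosed.subset_iff {G : Subgroup (Perm ℕ)} {K L : Finset ℕ} (hL : AlgClosed G L) :
    K ⊆ L ↔ ∀ g ∈ G, (∀ a ∈ L, g a = a) → ∀ a ∈ K, g a = a := by
  refine ⟨fun h g _ hg a ha => hg a (h ha), fun h b hb => algClosed_iff.1 hL b ?_⟩
  refine (Set.finite_singleton b).subset ?_
  rintro c ⟨g, hg, hA, rfl⟩
  exact h g hg hA b hb

theorem HasWEIgrp.exists_finset {G : Subgroup (Perm ℕ)} (hG : HasWEIgrp G) {H : Subgroup G}
    (hH : IsOpen (H : Set G)) :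
    ∃ K : Finset ℕ, AlgClosed G K ∧ stabIn G K ≤ H ∧ ∀ g ∈ H, ∀ a ∈ K, g.1 a ∈ K := by
  obtain ⟨K, ⟨hfin, hacl, h₁, h₂⟩, -⟩ := hG H hH
  lift K to Finset ℕ using hfin
  refine ⟨K, hacl, h₁, fun g hg a ha => ?_⟩
  have : (g : Perm ℕ) '' (K : Set ℕ) = K := h₂ hg
  rw [← Finset.mem_coe, ← this]
  exact ⟨a, ha, rfl⟩

theorem HasWEIgrp.exists_algClosed_superset {G : Subgroup (Perm ℕ)} (hG : HasWEIgrp G)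
    (F : Finset ℕ) : ∃ K : Finset ℕ, AlgClosed G K ∧ F ⊆ K := by
  obtain ⟨K, hK, h, -⟩ := hG.exists_finset (isOpen_subgroup_of_finset (stabIn G F) F le_rfl)
  exact ⟨K, hK, hK.subset_iff.2 fun g hg hgK a ha => @h ⟨g, hg⟩ hgK a ha⟩

open Classical in
/-- The finite family of algebraically closed subsets of `K`. -/
noncomputable def closedSubsets (G : Subgroup (Perm ℕ)) (K : Finset ℕ) : Finset (Finset ℕ) :=
  K.powerset.filter (AlgClosed G)

theorem mem_closedSubsets {G : Subgroup (Perm ℕ)} {K L : Finset ℕ} :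
    L ∈ closedSubsets G K ↔ L ⊆ K ∧ AlgClosed G L := by
  simp [closedSubsets]

/-- An algebraically closed set `K` is generated by a set with at most as many elements as there
are algebraically closed subsets of `K`. -/
theorem AlgClosed.exists_generators {G : Subgroup (Perm ℕ)} {K : Finset ℕ} (hK : AlgClosed G K) :
    ∃ S : Finset ℕ, S ⊆ K ∧ S.card ≤ (closedSubsets G K).card ∧
      ∀ L, AlgClosed G L → S ⊆ L → K ⊆ L := by
  classical
  have hex : ∀ L ∈ (closedSubsets G K).erase K, ∃ a ∈ K, a ∉ L := fun L hL => by
    obtain ⟨hne, hL⟩ := Finset.mem_erase.1 hL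
    by_contra! h
    exact hne ((mem_closedSubsets.1 hL).1.antisymm h)
  choose! p hpK hpL using hex
  refine ⟨((closedSubsets G K).erase K).image p, ?_, ?_, fun L hL hS => ?_⟩
  · exact Finset.image_subset_iff.2 hpK
  · exact Finset.card_image_le.trans (Finset.card_le_card (Finset.erase_subset _ _))
  · by_contra h
    have hmem : K ∩ L ∈ (closedSubsets G K).erase K :=
      Finset.mem_erase.2 ⟨fun he => h (Finset.inter_eq_left.1 he),
        mem_closedSubsets.2 ⟨Finset.inter_subset_left, hK.inter hL⟩⟩
    exact hpL _ hmem (Finset.mem_inter.2 ⟨hpK _ hmem, hS (Finset.mem_image_of_mem _ hmem)⟩)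

/-- `K` is the first algebraically closed set in its `G`-orbit, in a fixed enumeration of the
finite subsets of `ω`. -/
def IsRep (G : Subgroup (Perm ℕ)) (K : Finset ℕ) : Prop :=
  AlgClosed G K ∧
    ∀ K', Encodable.encode K' < Encodable.encode K → ¬ ∃ g ∈ G, K.image g = K'

theorem image_inv_eq {K L : Finset ℕ} {g : Perm ℕ} (h : K.image g = L) :
    L.image (g⁻¹ : Perm ℕ) = K := by
  subst h
  simp [Finset.image_image]

theorem AlgClosed.exists_isRep {G : Subgroup (Perm ℕ)} {K : Finset ℕ} (hK : AlgClosed G K) :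
    ∃ K₀, IsRep G K₀ ∧ ∃ g ∈ G, K₀.image g = K := by
  obtain ⟨K₀, ⟨g, hg, h⟩, hmin⟩ := WellFounded.has_min
    (measure (Encodable.encode : Finset ℕ → ℕ)).wf {K₀ | ∃ g ∈ G, K₀.image g = K}
    ⟨K, 1, G.one_mem, by simp⟩
  refine ⟨K₀, ⟨image_inv_eq h ▸ hK.image (G.inv_mem hg), ?_⟩, g, hg, h⟩
  rintro K' hlt ⟨u, hu, rfl⟩
  refine hmin _ ⟨g * u⁻¹, G.mul_mem hg (G.inv_mem hu), ?_⟩ hlt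
  simp [Finset.image_image, ← h]
  congr 1
  ext; simp

theorem IsRep.eq {G : Subgroup (Perm ℕ)} {K L : Finset ℕ} (hK : IsRep G K) (hL : IsRep G L)
    {g : Perm ℕ} (hg : g ∈ G) (h : K.image g = L) : K = L := by
  rcases lt_trichotomy (Encodable.encode K) (Encodable.encode L) with hlt | heq | hlt
  · exact (hL.2 K hlt ⟨g⁻¹, G.inv_mem hg, image_inv_eq h⟩).elim
  · exact Encodable.encode_injective heq
  · exact (hK.2 L hlt ⟨g, hg, h⟩).elim

theorem finite_isRep {G : Subgroup (Perm ℕ)} (hG : IsOligomorphic G) (n : ℕ) :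
    {K | IsRep G K ∧ (closedSubsets G K).card ≤ n}.Finite := by
  have hex : ∀ K : {K | IsRep G K ∧ (closedSubsets G K).card ≤ n}, ∃ m : Fin (n + 1),
      ∃ x : Fin m → ℕ, (∀ i, x i ∈ K.1) ∧ ∀ L, AlgClosed G L → (∀ i, x i ∈ L) → K.1 ⊆ L := by
    rintro ⟨K, hK, hn⟩
    obtain ⟨S, hSK, hcard, hS⟩ := hK.1.exists_generators
    refine ⟨⟨S.card, by omega⟩, fun i => (S.equivFin.symm i : ℕ), fun i => ?_, fun L hL hx => ?_⟩
    · exact hSK (S.equivFin.symm i).2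
    · refine hS L hL fun a ha => ?_
      have := hx (S.equivFin ⟨a, ha⟩)
      simpa using this
  choose m x hxK hx using hex
  have : ∀ k : ℕ, Finite (MulAction.orbitRel.Quotient G (Fin k → ℕ)) := hG
  let F : {K | IsRep G K ∧ (closedSubsets G K).card ≤ n} →
      Σ k : Fin (n + 1), MulAction.orbitRel.Quotient G (Fin k → ℕ) :=
    fun K => ⟨m K, Quotient.mk'' (x K)⟩
  have hF : ∀ (k l : Fin (n + 1)) (y : Fin k → ℕ) (z : Fin l → ℕ),
      (⟨k, Quotient.mk'' y⟩ : Σ k : Fin (n + 1), MulAction.orbitRel.Quotient G (Fin k → ℕ)) =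
        ⟨l, Quotient.mk'' z⟩ → ∃ g ∈ G, g '' Set.range z = Set.range y := by
    intro k l y z h
    obtain ⟨rfl, h⟩ := Sigma.mk.inj_iff.1 h
    obtain ⟨g, rfl⟩ : y ∈ MulAction.orbit G z := Quotient.exact' (eq_of_heq h)
    exact ⟨g, g.2, (Set.range_comp _ _).symm⟩
  have : Function.Injective F := by
    intro K L hKL
    obtain ⟨g, hg, h⟩ := hF _ _ _ _ hKL
    refine Subtype.ext (L.2.1.eq K.2.1 hg (Finset.Subset.antisymm ?_ ?_)).symm
    · rw [Finset.image_subset_iff]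
      intro a ha
      have h₁ : AlgClosed G (K.1.image (g⁻¹ : Perm ℕ)) := K.2.1.1.image (G.inv_mem hg)
      have := hx L _ h₁ (fun i => ?_) ha
      · obtain ⟨b, hb, rfl⟩ := Finset.mem_image.1 this
        simpa using hb
      · obtain ⟨j, hj⟩ : g (x L i) ∈ Set.range (x K) := h ▸ ⟨_, ⟨i, rfl⟩, rfl⟩
        exact Finset.mem_image.2 ⟨_, hxK K j, by simp [hj]⟩
    · refine hx K _ (L.2.1.1.image hg) fun i => ?_
      obtain ⟨_, ⟨j, rfl⟩, hj⟩ : x K i ∈ g '' Set.range (x L) := h ▸ ⟨i, rfl⟩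
      exact Finset.mem_image.2 ⟨_, hxK L j, hj⟩
  exact Set.finite_coe_iff.1 (Finite.of_injective F this)

/-! ### The category of elementary embeddings -/

/-- Codes for morphisms: domain, codomain, graph and level. -/
abbrev MorCode : Type := Finset ℕ × Finset ℕ × Finset (ℕ × ℕ) × ℕ

/-- The level of a morphism code. -/
def MorCode.level (x : MorCode) : ℕ := x.2.2.2

/-- `z` is the composition of `x` followed by `y`. -/
def MorCode.Comp (x y z : MorCode) : Prop :=
  x.1 = z.1 ∧ x.2.1 = y.1 ∧ y.2.1 = z.2.1 ∧
    ∀ a c, (a, c) ∈ z.2.2.1 ↔ ∃ b, (a, b) ∈ x.2.2.1 ∧ (b, c) ∈ y.2.2.1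

/-- The code of the restriction of `g` to a map from `K` to `L`. -/
noncomputable def mor (G : Subgroup (Perm ℕ)) (K L : Finset ℕ) (g : Perm ℕ) : MorCode :=
  (K, L, K.image fun a => (a, g a), (closedSubsets G K).card + (closedSubsets G L).card)

/-- `K` and `L` are representatives of `G`-orbits and `g ∈ G` maps `K` into `L`. -/
def IsMor (G : Subgroup (Perm ℕ)) (K L : Finset ℕ) (g : Perm ℕ) : Prop :=
  IsRep G K ∧ IsRep G L ∧ g ∈ G ∧ ∀ a ∈ K, g a ∈ L

/-- The set of codes of elementary embeddings between representatives. -/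
def Mor (G : Subgroup (Perm ℕ)) : Set MorCode :=
  {x | ∃ K L g, IsMor G K L g ∧ mor G K L g = x}

theorem mor_eq_iff {G : Subgroup (Perm ℕ)} {K L K' L' : Finset ℕ} {g g' : Perm ℕ} :
    mor G K L g = mor G K' L' g' ↔ K = K' ∧ L = L' ∧ ∀ a ∈ K, g a = g' a := by
  constructor
  · intro h
    simp only [mor, Prod.mk.injEq] at h
    obtain ⟨rfl, rfl, h, -⟩ := h
    refine ⟨rfl, rfl, fun a ha => ?_⟩
    have : (a, g a) ∈ K.image fun a => (a, g' a) := h ▸ Finset.mem_image_of_mem _ ha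
    simp only [Finset.mem_image, Prod.mk.injEq] at this
    obtain ⟨b, -, rfl, hb⟩ := this
    exact hb.symm
  · rintro ⟨rfl, rfl, h⟩
    simp only [mor, Prod.mk.injEq, true_and, and_true]
    exact Finset.image_congr fun a ha => by simp [h a ha]

theorem comp_mor_iff {G : Subgroup (Perm ℕ)} {K L K' L' K'' L'' : Finset ℕ} {g g' g'' : Perm ℕ}
    (hg : ∀ a ∈ K, g a ∈ L) :
    MorCode.Comp (mor G K L g) (mor G K' L' g') (mor G K'' L'' g'') ↔
      K = K'' ∧ L = K' ∧ L' = L'' ∧ ∀ a ∈ K, g'' a = g' (g a) := by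
  simp only [MorCode.Comp, mor, Finset.mem_image, Prod.mk.injEq]
  constructor
  · rintro ⟨rfl, rfl, rfl, h⟩
    refine ⟨rfl, rfl, rfl, fun a ha => ?_⟩
    obtain ⟨b, ⟨x, -, rfl, rfl⟩, ⟨y, -, rfl, h⟩⟩ := (h a (g'' a)).1 ⟨a, ha, rfl, rfl⟩
    exact h.symm
  · rintro ⟨rfl, rfl, rfl, h⟩
    refine ⟨rfl, rfl, rfl, fun a c => ⟨?_, ?_⟩⟩
    · rintro ⟨x, hx, rfl, rfl⟩
      exact ⟨g x, ⟨x, hx, rfl, rfl⟩, g x, hg x hx, rfl, (h x hx).symm⟩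
    · rintro ⟨b, ⟨x, hx, rfl, rfl⟩, y, -, rfl, rfl⟩
      exact ⟨x, hx, rfl, h x hx⟩

theorem finite_mor {G : Subgroup (Perm ℕ)} (hG : IsOligomorphic G) (n : ℕ) :
    {x | x ∈ Mor G ∧ x.level ≤ n}.Finite := by
  have hR := finite_isRep hG n
  refine ((hR.prod hR).biUnion (t := fun p => (fun q => (p.1, p.2, q,
    (closedSubsets G p.1).card + (closedSubsets G p.2).card)) ''
      ((p.1 ×ˢ p.2).powerset : Set (Finset (ℕ × ℕ)))) fun p _ =>
        (Finset.finite_toSet _).image _).subset ?_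
  rintro _ ⟨⟨K, L, g, ⟨hK, hL, hg, hgK⟩, rfl⟩, hn⟩
  simp only [MorCode.level, mor] at hn
  refine Set.mem_biUnion (x := (K, L)) ⟨⟨hK, by dsimp only; omega⟩, hL, by dsimp only; omega⟩
    ⟨_, ?_, rfl⟩
  simp only [Finset.coe_powerset, Set.mem_preimage, Set.mem_powerset_iff, Finset.coe_subset]
  rintro ⟨a, b⟩ hab
  simp only [Finset.mem_image, Prod.mk.injEq] at hab
  obtain ⟨a, ha, rfl, rfl⟩ := hab
  exact Finset.mem_product.2 ⟨ha, hgK a ha⟩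

/-! ### Measurability -/

theorem measurable_exists_mem {Q : Perm ℕ → Prop} (hQ : IsOpen {g | Q g}) :
    Measurable fun G : OligWEISpace => ∃ g ∈ G.1.1, Q g := by
  have h : MeasurableSet {G : ClosedSubgroups | ∃ g ∈ G.1, Q g} :=
    MeasurableSpace.measurableSet_generateFrom ⟨_, hQ, rfl⟩
  exact measurableSet_setOfPred.1 (measurable_subtype_coe h)

theorem measurable_algClosed (K : Finset ℕ) :
    Measurable fun G : OligWEISpace => AlgClosed G.1.1 K := by
  have : (fun G : OligWEISpace => AlgClosed G.1.1 K) = fun G => ∀ b,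
      (∃ F : Finset ℕ, ∀ c, (∃ g ∈ G.1.1, (∀ a ∈ K, g a = a) ∧ g b = c) → c ∈ F) → b ∈ K := by
    funext G
    rw [algClosed_iff]
    refine propext (forall_congr' fun b => imp_congr_left ?_)
    exact ⟨fun h => ⟨h.toFinset, fun c hc => by simpa using hc⟩,
      fun ⟨F, hF⟩ => F.finite_toSet.subset hF⟩
  rw [this]
  refine Measurable.forall fun b => Measurable.imp (Measurable.exists fun F =>
    Measurable.forall fun c => Measurable.imp (measurable_exists_mem ?_) measurable_const)
      measurable_const
  refine isOpen_of_exists_finset fun g hg => ⟨insert b K, fun g' hg' => ⟨fun a ha => ?_, ?_⟩⟩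
  · rw [hg' a (Finset.mem_insert_of_mem ha), hg.1 a ha]
  · rw [hg' b (Finset.mem_insert_self _ _), hg.2]

theorem measurable_isRep (K : Finset ℕ) :
    Measurable fun G : OligWEISpace => IsRep G.1.1 K := by
  refine (measurable_algClosed K).and (Measurable.forall fun K' => Measurable.imp measurable_const
    (measurable_exists_mem ?_).not)
  refine isOpen_of_exists_finset fun g hg => ⟨K, fun g' hg' => ?_⟩
  have hg : K.image g = K' := hg
  exact hg ▸ Finset.image_congr hg'

theorem measurable_card_closedSubsets (K : Finset ℕ) :
    Measurable fun G : OligWEISpace => (closedSubsets G.1.1 K).card := by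
  refine measurable_to_countable' fun k => ?_
  have : (fun G : OligWEISpace => (closedSubsets G.1.1 K).card) ⁻¹' {k} = {G | ∃ F : Finset (Finset ℕ),
      F.card = k ∧ ∀ L, L ∈ F ↔ L ⊆ K ∧ AlgClosed G.1.1 L} := by
    ext G
    constructor
    · rintro rfl
      exact ⟨_, rfl, fun L => mem_closedSubsets⟩
    · rintro ⟨F, rfl, hF⟩
      have : F = closedSubsets G.1.1 K := Finset.ext fun L => (hF L).trans mem_closedSubsets.symm
      rw [this]; rfl
  rw [this]
  exact measurableSet_setOfPred.2 (Measurable.exists fun F => measurable_const.and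
    (Measurable.forall fun L => measurable_const.iff
      (measurable_const.and (measurable_algClosed L))))

theorem measurable_mem_mor (x : MorCode) :
    Measurable fun G : OligWEISpace => x ∈ Mor G.1.1 := by
  obtain ⟨K, L, p, k⟩ := x
  have : (fun G : OligWEISpace => (K, L, p, k) ∈ Mor G.1.1) = fun G =>
      IsRep G.1.1 K ∧ IsRep G.1.1 L ∧
      (∃ g ∈ G.1.1, (∀ a ∈ K, g a ∈ L) ∧ (K.image fun a => (a, g a)) = p) ∧
      (closedSubsets G.1.1 K).card + (closedSubsets G.1.1 L).card = k := by
    funext G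
    refine propext ⟨?_, ?_⟩
    · rintro ⟨K', L', g, ⟨hK, hL, hg, hgK⟩, h⟩
      simp only [mor, Prod.mk.injEq] at h
      obtain ⟨rfl, rfl, rfl, rfl⟩ := h
      exact ⟨hK, hL, ⟨g, hg, hgK, rfl⟩, rfl⟩
    · rintro ⟨hK, hL, ⟨g, hg, hgK, rfl⟩, rfl⟩
      exact ⟨K, L, g, ⟨hK, hL, hg, hgK⟩, rfl⟩
  rw [this]
  refine (measurable_isRep K).and ((measurable_isRep L).and ((measurable_exists_mem ?_).and ?_))
  · refine isOpen_of_exists_finset fun g hg => ⟨K, fun g' hg' => ⟨fun a ha => ?_, ?_⟩⟩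
    · rw [hg' a ha]
      exact hg.1 a ha
    · rw [← hg.2]
      exact Finset.image_congr fun a ha => by simp [hg' a ha]
  · exact measurableSet_setOfPred.1 (((measurable_card_closedSubsets K).add
      (measurable_card_closedSubsets L)) (measurableSet_singleton k))

/-! ### Topological isomorphisms from matching exhaustions -/

/-- A correspondence `T` between the maps `C j → C k` induced by `G` and the maps `C' j → C' k`
induced by `H`, for exhaustions `C` and `C'` of `ω` by finite sets: `T` is an isomorphism of the
categories formed by these maps that matches inclusions with inclusions. -/
structure ChainCorr (G H : Subgroup (Perm ℕ)) (C C' : ℕ → Finset ℕ)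
    (T : ℕ → ℕ → Perm ℕ → Perm ℕ → Prop) : Prop where
  exhaust_left : ∀ F : Finset ℕ, ∃ j, F ⊆ C j
  exhaust_right : ∀ F : Finset ℕ, ∃ j, F ⊆ C' j
  mapsTo_left : ∀ {j k g h}, T j k g h → ∀ a ∈ C j, g a ∈ C k
  mapsTo_right : ∀ {j k g h}, T j k g h → ∀ a ∈ C' j, h a ∈ C' k
  mem_left : ∀ {j k g h}, T j k g h → g ∈ G
  mem_right : ∀ {j k g h}, T j k g h → h ∈ H
  total_left : ∀ {j k g}, g ∈ G → (∀ a ∈ C j, g a ∈ C k) → ∃ h, T j k g h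
  total_right : ∀ {j k h}, h ∈ H → (∀ a ∈ C' j, h a ∈ C' k) → ∃ g, T j k g h
  one : ∀ {j k}, j ≤ k → T j k 1 1
  mul : ∀ {j k l g h g' h'}, T j k g h → T k l g' h' → T j l (g' * g) (h' * h)
  eqOn_iff : ∀ {j k g h g' h'}, T j k g h → T j k g' h' →
    ((∀ a ∈ C j, g a = g' a) ↔ ∀ a ∈ C' j, h a = h' a)
  congr_left : ∀ {j k g h g'}, T j k g h → g' ∈ G → (∀ a ∈ C j, g a = g' a) → T j k g' h
  congr_right : ∀ {j k g h h'}, T j k g h → h' ∈ H → (∀ a ∈ C' j, h a = h' a) → T j k g h'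

namespace ChainCorr

variable {G H : Subgroup (Perm ℕ)} {C C' : ℕ → Finset ℕ} {T : ℕ → ℕ → Perm ℕ → Perm ℕ → Prop}

theorem symm (c : ChainCorr G H C C' T) : ChainCorr H G C' C fun j k h g => T j k g h where
  exhaust_left := c.exhaust_right
  exhaust_right := c.exhaust_left
  mapsTo_left := c.mapsTo_right
  mapsTo_right := c.mapsTo_left
  mem_left := c.mem_right
  mem_right := c.mem_left
  total_left := c.total_right
  total_right := c.total_left
  one := c.one
  mul := c.mul
  eqOn_iff h₁ h₂ := (c.eqOn_iff h₁ h₂).symm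
  congr_left := c.congr_right
  congr_right := c.congr_left

theorem raise (c : ChainCorr G H C C' T) {j k k' : ℕ} {g h : Perm ℕ} (t : T j k g h)
    (hk : k ≤ k') : T j k' g h := by
  simpa using c.mul t (c.one hk)

theorem lower (c : ChainCorr G H C C' T) {j j' k : ℕ} {g h : Perm ℕ} (t : T j' k g h)
    (hj : j ≤ j') : T j k g h := by
  simpa using c.mul (c.one hj) t

theorem eqOn_right (c : ChainCorr G H C C' T) {j k k' : ℕ} {g h g' h' : Perm ℕ} (t : T j k g h)
    (t' : T j k' g' h') (hg : ∀ a ∈ C j, g a = g' a) : ∀ a ∈ C' j, h a = h' a :=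
  (c.eqOn_iff (c.raise t (le_max_left k k')) (c.raise t' (le_max_right k k'))).1 hg

theorem exists_right (c : ChainCorr G H C C' T) {g : Perm ℕ} (hg : g ∈ G) (j : ℕ) :
    ∃ k h, T j k g h := by
  obtain ⟨k, hk⟩ := c.exhaust_left ((C j).image g)
  exact ⟨k, c.total_left hg fun a ha => hk (Finset.mem_image_of_mem _ ha)⟩

theorem exists_index (c : ChainCorr G H C C' T) (b : ℕ) : ∃ j, b ∈ C' j := by
  simpa using c.exhaust_right {b}

theorem exists_limit (c : ChainCorr G H C C' T) {g : Perm ℕ} (hg : g ∈ G) :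
    ∃ f : ℕ → ℕ, ∀ j, ∃ k h, T j k g h ∧ ∀ b ∈ C' j, h b = f b := by
  choose J hJ using c.exists_index
  choose k h t using c.exists_right hg
  refine ⟨fun b => h (J b) b, fun j => ⟨k j, h j, t j, fun b hb => ?_⟩⟩
  rcases le_total j (J b) with hle | hle
  · exact c.eqOn_right (t j) (c.lower (t (J b)) hle) (fun _ _ => rfl) b hb
  · exact c.eqOn_right (c.lower (t j) hle) (t (J b)) (fun _ _ => rfl) b (hJ b)

theorem leftInverse_limit (c : ChainCorr G H C C' T) {g g' : Perm ℕ} (hgg' : g' * g = 1)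
    {f f' : ℕ → ℕ} (hf : ∀ j, ∃ k h, T j k g h ∧ ∀ b ∈ C' j, h b = f b)
    (hf' : ∀ j, ∃ k h, T j k g' h ∧ ∀ b ∈ C' j, h b = f' b) : Function.LeftInverse f' f := by
  intro b
  obtain ⟨j, hj⟩ := c.exists_index b
  obtain ⟨k, h, t, hb⟩ := hf j
  obtain ⟨l, h', t', hb'⟩ := hf' k
  have := c.eqOn_right (c.mul t t') (c.one le_rfl) (by simp [hgg']) b hj
  rw [← hb b hj, ← hb' _ (c.mapsTo_right t b hj)]
  simpa using this

theorem exists_image (c : ChainCorr G H C C' T) (hH : IsClosed (H : Set (Perm ℕ))) {g : Perm ℕ}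
    (hg : g ∈ G) : ∃ h ∈ H, ∀ j, ∃ k, T j k g h := by
  obtain ⟨f, hf⟩ := c.exists_limit hg
  obtain ⟨f', hf'⟩ := c.exists_limit (G.inv_mem hg)
  let h : Perm ℕ := ⟨f, f', c.leftInverse_limit (by simp) hf hf',
    c.leftInverse_limit (by simp) hf' hf⟩
  have hh : h ∈ H := mem_of_isClosed hH fun F => by
    obtain ⟨j, hj⟩ := c.exhaust_right F
    obtain ⟨k, h', t, hb⟩ := hf j
    exact ⟨h', c.mem_right t, fun a ha => hb a (hj ha)⟩
  refine ⟨h, hh, fun j => ?_⟩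
  obtain ⟨k, h', t, hb⟩ := hf j
  exact ⟨k, c.congr_right t hh hb⟩

theorem image_unique (c : ChainCorr G H C C' T) {g h h' : Perm ℕ} (t : ∀ j, ∃ k, T j k g h)
    (t' : ∀ j, ∃ k, T j k g h') : h = h' := by
  ext b
  obtain ⟨j, hj⟩ := c.exists_index b
  obtain ⟨k, t⟩ := t j
  obtain ⟨k', t'⟩ := t' j
  exact c.eqOn_right t t' (fun _ _ => rfl) b hj

theorem continuous_of_rel (c : ChainCorr G H C C' T) (e : G →* H)
    (he : ∀ g : G, ∀ j, ∃ k, T j k g (e g)) : Continuous e := by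
  refine continuous_def.2 fun U hU => ?_
  obtain ⟨V, hV, rfl⟩ := isOpen_induced_iff.1 hU
  have hopen : IsOpen {g : Perm ℕ | ∃ u : G, (e u : Perm ℕ) ∈ V ∧ ∃ j, (∀ a ∈ C j, u.1 a = g a) ∧
      ∀ h : Perm ℕ, (∀ b ∈ C' j, h b = (e u : Perm ℕ) b) → h ∈ V} := by
    refine isOpen_of_exists_finset ?_
    rintro g ⟨u, hu, j, hj, hV⟩
    exact ⟨C j, fun g' hg' => ⟨u, hu, j, fun a ha => (hj a ha).trans (hg' a ha).symm, hV⟩⟩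
  refine isOpen_induced_iff.2 ⟨_, hopen, ?_⟩
  ext g
  constructor
  · rintro ⟨u, -, j, hj, hV⟩
    obtain ⟨k, t⟩ := he u j
    obtain ⟨k', t'⟩ := he g j
    exact hV _ (c.eqOn_right t' t fun a ha => (hj a ha).symm)
  · intro hg
    obtain ⟨F, hF⟩ := exists_finset_of_isOpen hV hg
    obtain ⟨j, hj⟩ := c.exhaust_right F
    exact ⟨g, hg, j, fun _ _ => rfl, fun h hh => hF h fun a ha => hh a (hj ha)⟩

theorem topIso (c : ChainCorr G H C C' T) (hG : IsClosed (G : Set (Perm ℕ)))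
    (hH : IsClosed (H : Set (Perm ℕ))) : TopIso G H := by
  have hmul : ∀ {g g' h h' : Perm ℕ}, (∀ j, ∃ k, T j k g h) → (∀ j, ∃ k, T j k g' h') →
      ∀ j, ∃ k, T j k (g' * g) (h' * h) := by
    intro g g' h h' t t' j
    obtain ⟨k, t⟩ := t j
    obtain ⟨l, t'⟩ := t' k
    exact ⟨l, c.mul t t'⟩
  choose φ hφH hφ using fun g : G => c.exists_image hH g.2
  choose ψ hψG hψ using fun h : H => c.symm.exists_image hG h.2
  let e : G ≃* H :=
    { toFun := fun g => ⟨φ g, hφH g⟩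
      invFun := fun h => ⟨ψ h, hψG h⟩
      left_inv := fun g => Subtype.ext (c.symm.image_unique (hψ ⟨φ g, hφH g⟩) (hφ g))
      right_inv := fun h => Subtype.ext (c.image_unique (hφ ⟨ψ h, hψG h⟩) (hψ h))
      map_mul' := fun g g' => Subtype.ext (c.image_unique (hφ (g * g')) (hmul (hφ g') (hφ g))) }
  exact ⟨e, c.continuous_of_rel e.toMonoidHom hφ, c.symm.continuous_of_rel e.symm.toMonoidHom hψ⟩

end ChainCorr

/-! ### Topological isomorphisms from isomorphisms of categories of elementary embeddings -/

theorem IsRep.isMor_one {G : Subgroup (Perm ℕ)} {K : Finset ℕ} (hK : IsRep G K) :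
    IsMor G K K 1 :=
  ⟨hK, hK, G.one_mem, fun _ ha => ha⟩

theorem IsMor.mul {G : Subgroup (Perm ℕ)} {K L N : Finset ℕ} {g g' : Perm ℕ}
    (h : IsMor G K L g) (h' : IsMor G L N g') : IsMor G K N (g' * g) :=
  ⟨h.1, h'.2.1, G.mul_mem h'.2.2.1 h.2.2.1, fun a ha => h'.2.2.2 _ (h.2.2.2 a ha)⟩

/-- The bijection `χ` sends the embedding `g : K → L` to the embedding `h : K' → L'`. -/
def Rel {G H : Subgroup (Perm ℕ)} (χ : Mor G ≃ Mor H) (K K' L L' : Finset ℕ) (g h : Perm ℕ) :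
    Prop :=
  IsMor G K L g ∧ IsMor H K' L' h ∧
    ∃ x : Mor G, x.1 = mor G K L g ∧ (χ x).1 = mor H K' L' h

/-- The bijection `χ` respects composition. -/
def PreservesComp {G H : Subgroup (Perm ℕ)} (χ : Mor G ≃ Mor H) : Prop :=
  ∀ x y z : Mor G, MorCode.Comp x.1 y.1 z.1 ↔ MorCode.Comp (χ x).1 (χ y).1 (χ z).1

section

variable {G H : Subgroup (Perm ℕ)} {χ : Mor G ≃ Mor H} {K K' L L' N N' : Finset ℕ}
  {g g' h h' : Perm ℕ}

theorem PreservesComp.symm (hχ : PreservesComp χ) : PreservesComp χ.symm := fun x y z => by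
  simpa using (hχ (χ.symm x) (χ.symm y) (χ.symm z)).symm

theorem Rel.symm (r : Rel χ K K' L L' g h) : Rel χ.symm K' K L' L h g := by
  obtain ⟨hg, hh, x, hx, hx'⟩ := r
  exact ⟨hh, hg, χ x, hx', by simpa using hx⟩

theorem IsMor.exists_rel (hg : IsMor G K L g) : ∃ K' L' h, Rel χ K K' L L' g h := by
  obtain ⟨K', L', h, hh, hx⟩ := (χ ⟨mor G K L g, K, L, g, hg, rfl⟩).2
  exact ⟨K', L', h, hg, hh, _, rfl, hx.symm⟩

theorem Rel.eqOn_iff (r : Rel χ K K' L L' g h) (r' : Rel χ K K' L L' g' h') :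
    (∀ a ∈ K, g a = g' a) ↔ ∀ a ∈ K', h a = h' a := by
  obtain ⟨-, -, x, hx, hx'⟩ := r
  obtain ⟨-, -, y, hy, hy'⟩ := r'
  have h₁ : mor G K L g = mor G K L g' ↔ mor H K' L' h = mor H K' L' h' := by
    rw [← hx, ← hy, ← hx', ← hy', ← Subtype.ext_iff, ← Subtype.ext_iff, χ.apply_eq_iff_eq]
  simpa [mor_eq_iff] using h₁

theorem Rel.congr_right (r : Rel χ K K' L L' g h) (hh' : h' ∈ H) (e : ∀ a ∈ K', h a = h' a) :
    Rel χ K K' L L' g h' := by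
  obtain ⟨hg, hh, x, hx, hx'⟩ := r
  exact ⟨hg, ⟨hh.1, hh.2.1, hh', fun a ha => e a ha ▸ hh.2.2.2 a ha⟩, x, hx,
    hx'.trans (mor_eq_iff.2 ⟨rfl, rfl, e⟩)⟩

theorem Rel.congr_left (r : Rel χ K K' L L' g h) (hg' : g' ∈ G) (e : ∀ a ∈ K, g a = g' a) :
    Rel χ K K' L L' g' h :=
  (r.symm.congr_right hg' e).symm

theorem IsRep.exists_rel_one (hχ : PreservesComp χ) (hK : IsRep G K) :
    ∃ K', Rel χ K K' K K' 1 1 := by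
  obtain ⟨K', L', h, r⟩ := hK.isMor_one.exists_rel (χ := χ)
  obtain ⟨-, hh, x, hx, hx'⟩ := id r
  have hc := (hχ x x x).1 (by rw [hx, comp_mor_iff] <;> simp)
  rw [hx', comp_mor_iff hh.2.2.2] at hc
  obtain ⟨-, rfl, -, hc⟩ := hc
  exact ⟨L', r.congr_right H.one_mem fun a ha => h.injective (by simpa using (hc a ha).symm)⟩

theorem Rel.exists_of_isMor (hχ : PreservesComp χ) (rK : Rel χ K K' K K' 1 1)
    (rL : Rel χ L L' L L' 1 1) (hg : IsMor G K L g) : ∃ h, Rel χ K K' L L' g h := by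
  obtain ⟨A, B, h, r⟩ := hg.exists_rel (χ := χ)
  obtain ⟨-, hh, z, hz, hz'⟩ := id r
  obtain ⟨-, hK', x, hx, hx'⟩ := rK
  obtain ⟨-, -, y, hy, hy'⟩ := rL
  have h₁ := (hχ x z z).1 (by rw [hx, hz, comp_mor_iff] <;> simp)
  have h₂ := (hχ z y z).1 (by rw [hy, hz, comp_mor_iff hg.2.2.2]; simp)
  rw [hx', hz', comp_mor_iff hK'.2.2.2] at h₁
  rw [hy', hz', comp_mor_iff hh.2.2.2] at h₂
  obtain ⟨rfl, -⟩ := h₁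
  obtain ⟨-, rfl, -⟩ := h₂
  exact ⟨h, r⟩

theorem Rel.mul (hχ : PreservesComp χ) (r : Rel χ K K' L L' g h) (r' : Rel χ L L' N N' g' h') :
    Rel χ K K' N N' (g' * g) (h' * h) := by
  obtain ⟨hg, hh, x, hx, hx'⟩ := r
  obtain ⟨hg', hh', y, hy, hy'⟩ := r'
  obtain ⟨A, B, u, r⟩ := (hg.mul hg').exists_rel (χ := χ)
  obtain ⟨-, hu, z, hz, hz'⟩ := id r
  have hc := (hχ x y z).1 (by rw [hx, hy, hz, comp_mor_iff hg.2.2.2]; simp)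
  rw [hx', hy', hz', comp_mor_iff hh.2.2.2] at hc
  obtain ⟨rfl, -, rfl, hc⟩ := hc
  exact r.congr_right (H.mul_mem hh'.2.2.1 hh.2.2.1) hc

/-- A pair of copies `u K` and `v K'` of corresponding representatives `K` and `K'`. -/
structure Link (χ : Mor G ≃ Mor H) where
  /-- the representative on the left -/
  left : Finset ℕ
  /-- the representative on the right -/
  right : Finset ℕ
  /-- the embedding of the left representative -/
  u : Perm ℕ
  /-- the embedding of the right representative -/
  v : Perm ℕ
  rel : Rel χ left right left right 1 1
  u_mem : u ∈ G
  v_mem : v ∈ H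

/-- The inclusions of the copies in `s` into those in `t` correspond to each other. -/
def Link.LE (s t : Link χ) : Prop :=
  Rel χ s.left s.right t.left t.right (t.u⁻¹ * s.u) (t.v⁻¹ * s.v)

theorem Link.le_refl (s : Link χ) : s.LE s := by
  simpa [Link.LE] using s.rel

theorem Link.LE.trans (hχ : PreservesComp χ) {s t w : Link χ} (h : s.LE t) (h' : t.LE w) :
    s.LE w := by
  have := Rel.mul hχ h h'
  simpa [Link.LE, mul_assoc] using this

/-- The link between the same copies with the roles of the groups exchanged. -/
def Link.symm (s : Link χ) : Link χ.symm :=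
  ⟨s.right, s.left, s.v, s.u, s.rel.symm, s.v_mem, s.u_mem⟩

theorem Link.LE.mem_left {s t : Link χ} (h : s.LE t) {a : ℕ} (ha : a ∈ s.left.image s.u) :
    a ∈ t.left.image t.u := by
  obtain ⟨x, hx, rfl⟩ := Finset.mem_image.1 ha
  exact Finset.mem_image.2 ⟨_, h.1.2.2.2 x hx, by simp⟩

theorem Link.LE.mem_right {s t : Link χ} (h : s.LE t) {a : ℕ} (ha : a ∈ s.right.image s.v) :
    a ∈ t.right.image t.v :=
  Link.LE.mem_left (s := s.symm) (t := t.symm) (Rel.symm h) ha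

theorem Link.extend_left (hG : HasWEIgrp G) (hχ : PreservesComp χ) (s : Link χ) (a : ℕ) :
    ∃ t : Link χ, s.LE t ∧ a ∈ t.left.image t.u := by
  obtain ⟨M, hM, hsub⟩ := hG.exists_algClosed_superset (insert a (s.left.image s.u))
  obtain ⟨L, hL, u, hu, rfl⟩ := hM.exists_isRep
  obtain ⟨L', rL⟩ := hL.exists_rel_one (χ := χ) hχ
  have hmor : IsMor G s.left L (u⁻¹ * s.u) := by
    refine ⟨s.rel.1.1, hL, G.mul_mem (G.inv_mem hu) s.u_mem, fun x hx => ?_⟩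
    have := hsub (Finset.mem_insert_of_mem (Finset.mem_image_of_mem s.u hx))
    obtain ⟨y, hy, hxy⟩ := Finset.mem_image.1 this
    simpa [← hxy] using hy
  obtain ⟨h, r⟩ := Rel.exists_of_isMor hχ s.rel rL hmor
  refine ⟨⟨L, L', u, s.v * h⁻¹, rL, hu, H.mul_mem s.v_mem (H.inv_mem r.2.1.2.2.1)⟩, ?_,
    hsub (Finset.mem_insert_self _ _)⟩
  simpa [Link.LE] using r

theorem Link.extend_right (hH : HasWEIgrp H) (hχ : PreservesComp χ) (s : Link χ) (a : ℕ) :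
    ∃ t : Link χ, s.LE t ∧ a ∈ t.right.image t.v := by
  obtain ⟨t, ht, ha⟩ := s.symm.extend_left hH hχ.symm a
  exact ⟨t.symm, Rel.symm ht, ha⟩

theorem exists_link_sequence (hG : HasWEIgrp G) (hH : HasWEIgrp H) (hχ : PreservesComp χ) :
    ∃ s : ℕ → Link χ, (∀ j k, j ≤ k → (s j).LE (s k)) ∧
      (∀ F : Finset ℕ, ∃ j, F ⊆ (s j).left.image (s j).u) ∧
      ∀ F : Finset ℕ, ∃ j, F ⊆ (s j).right.image (s j).v := by
  have step : ∀ (s : Link χ) (a : ℕ), ∃ t : Link χ,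
      s.LE t ∧ a ∈ t.left.image t.u ∧ a ∈ t.right.image t.v := by
    intro s a
    obtain ⟨t, ht, ha⟩ := s.extend_left hG hχ a
    obtain ⟨w, hw, ha'⟩ := t.extend_right hH hχ a
    exact ⟨w, ht.trans hχ hw, hw.mem_left ha, ha'⟩
  choose nxt hle hl hr using step
  obtain ⟨K, hK, -⟩ := hG.exists_algClosed_superset ∅
  obtain ⟨K, hK, -⟩ := hK.exists_isRep
  obtain ⟨K', r⟩ := hK.exists_rel_one hχ
  let s : ℕ → Link χ := fun n =>
    Nat.rec ⟨K, K', 1, 1, r, G.one_mem, H.one_mem⟩ (fun n t => nxt t n) n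
  have hmono : ∀ j k, j ≤ k → (s j).LE (s k) := fun j k hjk => by
    induction k, hjk using Nat.le_induction with
    | base => exact (s j).le_refl
    | succ k _ ih => exact ih.trans hχ (hle (s k) k)
  refine ⟨s, hmono, fun F => ⟨F.sup id + 1, fun a ha => ?_⟩, fun F => ⟨F.sup id + 1, fun a ha => ?_⟩⟩
  · exact (hmono (a + 1) _ (Nat.succ_le_succ (Finset.le_sup (f := id) ha))).mem_left (hl (s a) a)
  · exact (hmono (a + 1) _ (Nat.succ_le_succ (Finset.le_sup (f := id) ha))).mem_right (hr (s a) a)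

theorem PreservesComp.topIso (hG : HasWEIgrp G) (hH : HasWEIgrp H)
    (hG' : IsClosed (G : Set (Perm ℕ))) (hH' : IsClosed (H : Set (Perm ℕ)))
    (hχ : PreservesComp χ) : TopIso G H := by
  obtain ⟨s, hmono, hl, hr⟩ := exists_link_sequence hG hH hχ
  have c : ChainCorr G H (fun j => (s j).left.image (s j).u) (fun j => (s j).right.image (s j).v)
      (fun j k g h => Rel χ (s j).left (s j).right (s k).left (s k).right
        ((s k).u⁻¹ * g * (s j).u) ((s k).v⁻¹ * h * (s j).v)) :=
    { exhaust_left := hl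
      exhaust_right := hr
      mapsTo_left := fun {j k g h} r a ha => by
        obtain ⟨x, hx, rfl⟩ := Finset.mem_image.1 ha
        exact Finset.mem_image.2 ⟨_, r.1.2.2.2 x hx, by simp⟩
      mapsTo_right := fun {j k g h} r a ha => by
        obtain ⟨x, hx, rfl⟩ := Finset.mem_image.1 ha
        exact Finset.mem_image.2 ⟨_, r.2.1.2.2.2 x hx, by simp⟩
      mem_left := fun {j k g h} r => by
        simpa [mul_assoc, Subgroup.mul_mem_cancel_left, Subgroup.mul_mem_cancel_right,
          (s k).u_mem, (s j).u_mem] using r.1.2.2.1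
      mem_right := fun {j k g h} r => by
        simpa [mul_assoc, Subgroup.mul_mem_cancel_left, Subgroup.mul_mem_cancel_right,
          (s k).v_mem, (s j).v_mem] using r.2.1.2.2.1
      total_left := fun {j k g} hg hmaps => by
        have hm : IsMor G (s j).left (s k).left ((s k).u⁻¹ * g * (s j).u) := by
          refine ⟨(s j).rel.1.1, (s k).rel.1.1,
            G.mul_mem (G.mul_mem (G.inv_mem (s k).u_mem) hg) (s j).u_mem, fun x hx => ?_⟩
          obtain ⟨y, hy, hxy⟩ := Finset.mem_image.1 (hmaps _ (Finset.mem_image_of_mem _ hx))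
          simpa [← hxy] using hy
        obtain ⟨h, r⟩ := Rel.exists_of_isMor hχ (s j).rel (s k).rel hm
        exact ⟨(s k).v * h * (s j).v⁻¹, by simpa [mul_assoc] using r⟩
      total_right := fun {j k h} hh hmaps => by
        have hm : IsMor H (s j).right (s k).right ((s k).v⁻¹ * h * (s j).v) := by
          refine ⟨(s j).rel.2.1.1, (s k).rel.2.1.1,
            H.mul_mem (H.mul_mem (H.inv_mem (s k).v_mem) hh) (s j).v_mem, fun x hx => ?_⟩
          obtain ⟨y, hy, hxy⟩ := Finset.mem_image.1 (hmaps _ (Finset.mem_image_of_mem _ hx))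
          simpa [← hxy] using hy
        obtain ⟨g, r⟩ := Rel.exists_of_isMor hχ.symm (s j).rel.symm (s k).rel.symm hm
        exact ⟨(s k).u * g * (s j).u⁻¹, by simpa [mul_assoc] using r.symm⟩
      one := fun {j k} hjk => by simpa [Link.LE] using hmono j k hjk
      mul := fun {j k l g h g' h'} r r' => by
        have := Rel.mul hχ r r'
        simpa [mul_assoc] using this
      eqOn_iff := fun {j k g h g' h'} r r' => by
        simpa [mul_assoc] using Rel.eqOn_iff r r'
      congr_left := fun {j k g h g'} r hg' e => by
        refine r.congr_left (G.mul_mem (G.mul_mem (G.inv_mem (s k).u_mem) hg') (s j).u_mem)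
          fun x hx => ?_
        simp [e _ (Finset.mem_image_of_mem _ hx)]
      congr_right := fun {j k g h h'} r hh' e => by
        refine r.congr_right (H.mul_mem (H.mul_mem (H.inv_mem (s k).v_mem) hh') (s j).v_mem)
          fun x hx => ?_
        simp [e _ (Finset.mem_image_of_mem _ hx)] }
  exact c.topIso hG' hH'

end

/-! ### Isomorphisms of categories of elementary embeddings from topological isomorphisms -/

theorem card_closedSubsets_le_image {G : Subgroup (Perm ℕ)} {g : Perm ℕ} (hg : g ∈ G)
    (K : Finset ℕ) : (closedSubsets G K).card ≤ (closedSubsets G (K.image g)).card := by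
  refine Finset.card_le_card_of_injOn (fun L => L.image g) (fun L hL => ?_) fun L _ L' _ h =>
    Finset.image_injective g.injective h
  have := mem_closedSubsets.1 hL
  exact mem_closedSubsets.2 ⟨Finset.image_subset_image this.1, this.2.image hg⟩

theorem card_closedSubsets_image {G : Subgroup (Perm ℕ)} {g : Perm ℕ} (hg : g ∈ G)
    (K : Finset ℕ) : (closedSubsets G (K.image g)).card = (closedSubsets G K).card := by
  refine (card_closedSubsets_le_image hg K).antisymm' ?_
  have := card_closedSubsets_le_image (G.inv_mem hg) (K.image g)
  rwa [image_inv_eq rfl] at this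

/-- The isomorphism `e` sends the pointwise stabilizer of `K` to that of `K'`. -/
def Transfers {G H : Subgroup (Perm ℕ)} (e : G ≃* H) (K K' : Finset ℕ) : Prop :=
  AlgClosed G K ∧ AlgClosed H K' ∧
    ∀ g : G, (∀ a ∈ K, g.1 a = a) ↔ ∀ a ∈ K', (e g).1 a = a

section

variable {G H : Subgroup (Perm ℕ)} {e : G ≃* H} {K K' L L' : Finset ℕ}

theorem Transfers.symm (t : Transfers e K K') : Transfers e.symm K' K :=
  ⟨t.2.1, t.1, fun h => by simpa using (t.2.2 (e.symm h)).symm⟩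

/-- The pointwise stabilizers of finite algebraically closed sets are the open subgroups without
proper open subgroups of finite index, hence they are preserved by topological isomorphisms. -/
theorem AlgClosed.exists_transfers (hG : HasWEIgrp G) (hH : HasWEIgrp H) (hc : Continuous e)
    (hc' : Continuous e.symm) (hK : AlgClosed G K) : ∃ K', Transfers e K K' := by
  have hU : IsOpen ((stabIn G K).comap e.symm.toMonoidHom : Set H) :=
    (isOpen_subgroup_of_finset (stabIn G K) K le_rfl).preimage hc'
  obtain ⟨K', hK', h₁, h₂⟩ := hH.exists_finset hU
  have hL : IsOpen ((stabIn H K').comap e.toMonoidHom : Set G) :=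
    (isOpen_subgroup_of_finset (stabIn H K') K' le_rfl).preimage hc
  obtain ⟨M, hM, h₃, h₄⟩ := hG.exists_finset hL
  have hfix : ∀ g : G, (∀ a ∈ K, g.1 a = a) → ∀ a ∈ K', (e g).1 a ∈ K' := fun g hg =>
    h₂ (e g) (show e.symm (e g) ∈ stabIn G K by rw [e.symm_apply_apply]; exact hg)
  have hsub : M ⊆ K := by
    intro b hb
    refine algClosed_iff.1 hK b ?_
    have hfin : ∀ t : K' → K', {c | ∃ g : G, (∀ a ∈ K, g.1 a = a) ∧
        (∀ a : K', (e g).1 a = t a) ∧ g.1 b = c}.Finite := by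
      intro t
      by_cases ht : ∃ g : G, ∀ a : K', (e g).1 a = t a
      · obtain ⟨g₀, hg₀⟩ := ht
        refine (M.finite_toSet.image g₀.1).subset ?_
        rintro c ⟨g, -, hg, rfl⟩
        refine ⟨g₀.1⁻¹ (g.1 b), ?_, by simp⟩
        refine h₄ (g₀⁻¹ * g) (fun a ha => ?_) b hb
        change (e (g₀⁻¹ * g)).1 a = a
        rw [map_mul, map_inv]
        have h := (hg ⟨a, ha⟩).trans (hg₀ ⟨a, ha⟩).symm
        simp only [Subgroup.coe_mul, Subgroup.coe_inv, Perm.coe_mul, Function.comp_apply] at h ⊢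
        rw [h]
        simp
      · refine Set.finite_empty.subset ?_
        rintro c ⟨g, -, hg, -⟩
        exact ht ⟨g, hg⟩
    refine (Set.finite_iUnion hfin).subset ?_
    rintro c ⟨g, hg, hgK, rfl⟩
    exact Set.mem_iUnion.2 ⟨fun a => ⟨_, hfix ⟨g, hg⟩ hgK a a.2⟩, ⟨g, hg⟩, hgK, fun _ => rfl, rfl⟩
  refine ⟨K', hK, hK', fun g => ⟨fun hg => ?_, fun hg => ?_⟩⟩
  · exact h₃ (fun a ha => hg a (hsub ha) : g ∈ stabIn G M)
  · have : e.symm (e g) ∈ stabIn G K := h₁ (show e g ∈ stabIn H K' from hg)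
    rwa [e.symm_apply_apply] at this

theorem Transfers.subset_iff (t : Transfers e K K') (t' : Transfers e L L') :
    K ⊆ L ↔ K' ⊆ L' := by
  rw [t'.1.subset_iff, t'.2.1.subset_iff]
  constructor
  · intro h g hg
    have := h (e.symm ⟨g, hg⟩).1 (e.symm ⟨g, hg⟩).2
    rw [t.2.2, t'.2.2] at this
    simpa using this
  · intro h g hg
    have := h (e ⟨g, hg⟩).1 (e ⟨g, hg⟩).2
    rwa [← t.2.2, ← t'.2.2] at this

theorem Transfers.right_unique (t : Transfers e K K') (t' : Transfers e K L') : K' = L' :=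
  ((t.subset_iff t').1 subset_rfl).antisymm ((t'.subset_iff t).1 subset_rfl)

theorem Transfers.eqOn_iff (t : Transfers e K K') (g g' : G) :
    (∀ a ∈ K, g.1 a = g'.1 a) ↔ ∀ a ∈ K', (e g).1 a = (e g').1 a := by
  have := t.2.2 (g'⁻¹ * g)
  simpa [Equiv.symm_apply_eq] using this

theorem Transfers.image (t : Transfers e K K') (g : G) :
    Transfers e (K.image g.1) (K'.image (e g).1) := by
  refine ⟨t.1.image g.2, t.2.1.image (e g).2, fun u => ?_⟩
  have := t.eqOn_iff (u * g) g
  simpa using this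

theorem Transfers.card_le (ht : ∀ K, AlgClosed G K → ∃ K', Transfers e K K')
    (t : Transfers e K K') : (closedSubsets G K).card ≤ (closedSubsets H K').card := by
  choose! φ hφ using ht
  refine Finset.card_le_card_of_injOn φ (fun L hL => ?_) fun L hL L' hL' h => ?_
  · obtain ⟨hsub, hcl⟩ := mem_closedSubsets.1 hL
    exact mem_closedSubsets.2 ⟨((hφ L hcl).subset_iff t).1 hsub, (hφ L hcl).2.1⟩
  · have h₁ := hφ L (mem_closedSubsets.1 hL).2
    have h₂ := hφ L' (mem_closedSubsets.1 hL').2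
    rw [← h] at h₂
    exact h₁.symm.right_unique h₂.symm

theorem exists_preservesComp (hG : HasWEIgrp G) (hH : HasWEIgrp H) (hc : Continuous e)
    (hc' : Continuous e.symm) :
    ∃ χ : Mor G ≃ Mor H, PreservesComp χ ∧ ∀ x, (χ x).1.level = x.1.level := by
  have ht : ∀ K, AlgClosed G K → ∃ K', Transfers e K K' := fun K hK =>
    hK.exists_transfers hG hH hc hc'
  have ht' : ∀ K, AlgClosed H K → ∃ K', Transfers e.symm K K' := fun K hK =>
    hK.exists_transfers hH hG hc' hc
  have hrep : ∀ K, IsRep G K → ∃ K' : Finset ℕ, ∃ w : H,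
      IsRep H K' ∧ Transfers e K (K'.image w.1) := by
    intro K hK
    obtain ⟨M, hM⟩ := ht K hK.1
    obtain ⟨K', hK', w, hw, rfl⟩ := hM.2.1.exists_isRep
    exact ⟨K', ⟨w, hw⟩, hK', hM⟩
  choose! σ w hσ hw using hrep
  have hσ_inj : ∀ K L, IsRep G K → IsRep G L → σ K = σ L → K = L := by
    intro K L hK hL h
    have h₁ := (hw K hK).image (e.symm (w L * (w K)⁻¹))
    have h₂ : ((σ K).image (w K).1).image (e (e.symm (w L * (w K)⁻¹))).1 =
        (σ L).image (w L).1 := by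
      rw [e.apply_symm_apply, Finset.image_image, ← h]
      exact Finset.image_congr fun a _ => by simp
    rw [h₂] at h₁
    exact hK.eq hL (e.symm (w L * (w K)⁻¹)).2 (h₁.symm.right_unique (hw L hL).symm)
  have hσ_surj : ∀ A, IsRep H A → ∃ K, IsRep G K ∧ σ K = A := by
    intro A hA
    obtain ⟨M, hM⟩ := ht' A hA.1
    obtain ⟨K, hK, g, hg, rfl⟩ := hM.2.1.exists_isRep
    refine ⟨K, hK, (hσ K hK).eq hA (g := (e ⟨g, hg⟩ * w K).1) (e ⟨g, hg⟩ * w K).2 ?_⟩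
    have h₁ := (hw K hK).image ⟨g, hg⟩
    rw [Finset.image_image] at h₁
    exact h₁.right_unique hM.symm
  have hlevel : ∀ K, IsRep G K → (closedSubsets H (σ K)).card = (closedSubsets G K).card := by
    intro K hK
    rw [← card_closedSubsets_image (w K).2]
    exact ((hw K hK).symm.card_le ht').antisymm ((hw K hK).card_le ht)
  have hmor : ∀ K L, IsRep G K → IsRep G L → ∀ g : G,
      (∀ a ∈ K, g.1 a ∈ L) ↔ ∀ a ∈ σ K, ((w L)⁻¹ * e g * w K).1 a ∈ σ L := by
    intro K L hK hL g
    have := ((hw K hK).image g).subset_iff (hw L hL)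
    rw [Finset.image_subset_iff, Finset.image_image, Finset.image_subset_iff] at this
    rw [this]
    refine forall₂_congr fun a _ => ?_
    simp only [Finset.mem_image, Subgroup.coe_mul, Subgroup.coe_inv, Perm.coe_mul,
      Function.comp_apply]
    constructor
    · rintro ⟨b, hb, h⟩
      simpa [← h] using hb
    · exact fun h => ⟨_, h, by simp⟩
  have hdata : ∀ x : Mor G, ∃ K L, ∃ g : G, IsMor G K L g ∧ mor G K L g = x.1 := by
    rintro ⟨x, K, L, g, h, rfl⟩
    exact ⟨K, L, ⟨g, h.2.2.1⟩, h, rfl⟩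
  choose D R γ hγ hx using hdata
  let F : Mor G → Mor H := fun x =>
    ⟨mor H (σ (D x)) (σ (R x)) ((w (R x))⁻¹ * e (γ x) * w (D x)).1, _, _, _,
      ⟨hσ _ (hγ x).1, hσ _ (hγ x).2.1, Subtype.prop _,
        (hmor _ _ (hγ x).1 (hγ x).2.1 _).1 (hγ x).2.2.2⟩, rfl⟩
  have hinj : Function.Injective F := by
    intro x y hxy
    obtain ⟨h₁, h₂, h₃⟩ := mor_eq_iff.1 (congrArg Subtype.val hxy)
    have h₁ := hσ_inj _ _ (hγ x).1 (hγ y).1 h₁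
    have h₂ := hσ_inj _ _ (hγ x).2.1 (hγ y).2.1 h₂
    refine Subtype.ext ?_
    rw [← hx x, ← hx y, mor_eq_iff]
    refine ⟨h₁, h₂, ((hw _ (hγ x).1).eqOn_iff _ _).2 fun a ha => ?_⟩
    obtain ⟨b, hb, rfl⟩ := Finset.mem_image.1 ha
    simpa [← h₁, ← h₂] using h₃ b hb
  have hsurj : Function.Surjective F := by
    rintro ⟨_, A, B, h, hh, rfl⟩
    obtain ⟨K, hK, rfl⟩ := hσ_surj A hh.1
    obtain ⟨L, hL, rfl⟩ := hσ_surj B hh.2.1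
    let g : G := e.symm (w L * ⟨h, hh.2.2.1⟩ * (w K)⁻¹)
    have hg : ∀ a ∈ K, g.1 a ∈ L := (hmor K L hK hL g).2 (by simpa [g] using hh.2.2.2)
    let x : Mor G := ⟨mor G K L g, K, L, g, ⟨hK, hL, g.2, hg⟩, rfl⟩
    obtain ⟨h₁, h₂, h₃⟩ := mor_eq_iff.1 (hx x)
    refine ⟨x, Subtype.ext (mor_eq_iff.2 ⟨congrArg σ h₁, congrArg σ h₂, fun a ha => ?_⟩)⟩
    have := ((hw _ (hγ x).1).eqOn_iff _ _).1 h₃ _ (Finset.mem_image_of_mem _ ha)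
    simp only [Subgroup.coe_mul, Subgroup.coe_inv, Perm.coe_mul, Function.comp_apply, this]
    simp [g, h₁, h₂]
  refine ⟨Equiv.ofBijective F ⟨hinj, hsurj⟩, fun x y z => ?_, fun x => ?_⟩
  · rw [← hx x, ← hx y, ← hx z, comp_mor_iff (hγ x).2.2.2]
    have hF : ∀ x, (F x).1 =
        mor H (σ (D x)) (σ (R x)) ((w (R x))⁻¹ * e (γ x) * w (D x)).1 := fun _ => rfl
    change _ ↔ MorCode.Comp (F x).1 (F y).1 (F z).1
    rw [hF, hF, hF,
      comp_mor_iff ((hmor _ _ (hγ x).1 (hγ x).2.1 _).1 (hγ x).2.2.2)]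
    have hσ_iff : ∀ K L, IsRep G K → IsRep G L → (K = L ↔ σ K = σ L) := fun K L hK hL =>
      ⟨congrArg σ, hσ_inj K L hK hL⟩
    rw [← hσ_iff _ _ (hγ x).1 (hγ z).1, ← hσ_iff _ _ (hγ x).2.1 (hγ y).1,
      ← hσ_iff _ _ (hγ y).2.1 (hγ z).2.1]
    refine and_congr_right fun h₁ => and_congr_right fun h₂ => and_congr_right fun h₃ => ?_
    have := (hw _ (hγ x).1).eqOn_iff (γ z) (γ y * γ x)
    simpa [← h₁, ← h₂, ← h₃] using this
  · rw [← hx x]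
    simp [F, mor, MorCode.level, hlevel _ (hγ x).1, hlevel _ (hγ x).2.1]

end

/-- Level preserving isomorphism of finite sets of codes, with respect to composition. -/
instance codeSetoid : Setoid (Finset MorCode) where
  r F F' := ∃ e : F ≃ F', (∀ x, (e x).1.level = x.1.level) ∧
    ∀ x y z, MorCode.Comp x.1 y.1 z.1 ↔ MorCode.Comp (e x).1 (e y).1 (e z).1
  iseqv :=
    { refl := fun _ => ⟨Equiv.refl _, fun _ => rfl, fun _ _ _ => Iff.rfl⟩
      symm := by
        rintro F F' ⟨e, h₁, h₂⟩
        refine ⟨e.symm, fun x => ?_, fun x y z => ?_⟩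
        · simpa using (h₁ (e.symm x)).symm
        · simpa using (h₂ (e.symm x) (e.symm y) (e.symm z)).symm
      trans := by
        rintro F F' F'' ⟨e, h₁, h₂⟩ ⟨e', h₁', h₂'⟩
        exact ⟨e.trans e', fun x => (h₁' _).trans (h₁ _),
          fun x y z => (h₂ _ _ _).trans (h₂' _ _ _)⟩ }

/-- The finite set of morphisms of level at most `n`. -/
noncomputable def code (G : OligWEISpace) (n : ℕ) : Finset MorCode :=
  (finite_mor G.2.1 n).toFinset

theorem mem_code {G : OligWEISpace} {n : ℕ} {x : MorCode} :
    x ∈ code G n ↔ x ∈ Mor G.1.1 ∧ x.level ≤ n := by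
  simp [code]

theorem measurable_code (n : ℕ) : @Measurable _ _ _ ⊤ fun G => code G n := by
  let : MeasurableSpace (Finset MorCode) := ⊤
  refine measurable_to_countable' fun F => ?_
  have : (fun G => code G n) ⁻¹' {F} =
      {G | ∀ x, (x ∈ Mor G.1.1 ∧ x.level ≤ n) ↔ x ∈ F} := by
    ext G
    simp [Finset.ext_iff, mem_code]
  rw [this]
  exact measurableSet_setOfPred.2 <| Measurable.forall fun x =>
    ((measurable_mem_mor x).and measurable_const).iff measurable_const

theorem TopIso.code_equiv {G H : OligWEISpace} (h : TopIso G.1.1 H.1.1) (n : ℕ) :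
    code G n ≈ code H n := by
  obtain ⟨e, hc, hc'⟩ := h
  obtain ⟨χ, hχ, hl⟩ := exists_preservesComp G.2.2 H.2.2 hc hc'
  have hl' : ∀ y, (χ.symm y).1.level = y.1.level := fun y => by
    simpa using (hl (χ.symm y)).symm
  refine ⟨⟨fun x => ⟨(χ ⟨x.1, (mem_code.1 x.2).1⟩).1, mem_code.2 ⟨Subtype.prop _, ?_⟩⟩,
    fun y => ⟨(χ.symm ⟨y.1, (mem_code.1 y.2).1⟩).1, mem_code.2 ⟨Subtype.prop _, ?_⟩⟩,
    fun x => by simp, fun y => by simp⟩, fun x => hl _, fun x y z =>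
    hχ ⟨x.1, (mem_code.1 x.2).1⟩ ⟨y.1, (mem_code.1 y.2).1⟩ ⟨z.1, (mem_code.1 z.2).1⟩⟩
  · rw [hl]
    exact (mem_code.1 x.2).2
  · rw [hl']
    exact (mem_code.1 y.2).2

theorem topIso_of_code_equiv {G H : OligWEISpace} (h : ∀ n, code G n ≈ code H n) :
    TopIso G.1.1 H.1.1 := by
  choose e hl hcomp using h
  have hmem : ∀ (t : Finset (Mor G.1.1)) (x : t), x.1.1 ∈ code G (t.sup fun x => x.1.level) :=
    fun t x => mem_code.2 ⟨x.1.2, Finset.le_sup (f := fun x : Mor G.1.1 => x.1.level) x.2⟩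
  let g : (t : Finset (Mor G.1.1)) → (x : t) → code H x.1.1.level := fun t x =>
    ⟨(e _ ⟨x.1.1, hmem t x⟩).1, mem_code.2 ⟨(mem_code.1 (Subtype.prop _)).1, (hl _ _).le⟩⟩
  obtain ⟨χ, hχ⟩ := Finset.rado_selection_subtype
    (β := fun x : Mor G.1.1 => code H x.1.level) g
  -- On every finite set, `χ` agrees with one of the given isomorphisms.
  have key : ∀ s : Finset (Mor G.1.1), ∃ n, ∃ hn : ∀ x ∈ s, x.1 ∈ code G n,
      ∀ x (hx : x ∈ s), (χ x).1 = (e n ⟨x.1, hn x hx⟩).1 := by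
    intro s
    obtain ⟨t, hst, ht⟩ := hχ s
    exact ⟨_, fun x hx => hmem t ⟨x, hst hx⟩, fun x hx => congrArg Subtype.val (ht ⟨x, hx⟩)⟩
  let F : Mor G.1.1 → Mor H.1.1 := fun x => ⟨(χ x).1, (mem_code.1 (χ x).2).1⟩
  have hinj : Function.Injective F := by
    classical
    intro x y hxy
    obtain ⟨n, hn, h⟩ := key {x, y}
    have h' : (χ x).1 = (χ y).1 := congrArg Subtype.val hxy
    rw [h x (by simp), h y (by simp)] at h'
    exact Subtype.ext (Subtype.mk.inj ((e n).injective (Subtype.ext h')))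
  have hsurj : Function.Surjective F := by
    classical
    intro y
    let s : Finset (Mor G.1.1) := (code G y.1.level).attach.image fun x =>
      ⟨x.1, (mem_code.1 x.2).1⟩
    have hs : ∀ x : Mor G.1.1, x.1.level ≤ y.1.level → x ∈ s := fun x hx =>
      Finset.mem_image.2 ⟨⟨x.1, mem_code.2 ⟨x.2, hx⟩⟩, Finset.mem_attach _ _, rfl⟩
    have hl' : ∀ n (x : code H n), ((e n).symm x).1.level = x.1.level := fun n x => by
      simpa using (hl n ((e n).symm x)).symm
    obtain ⟨n, hn, h⟩ := key s
    have hyn : y.1.level ≤ n := by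
      let x := (e y.1.level).symm ⟨y.1, mem_code.2 ⟨y.2, le_rfl⟩⟩
      have hx : x.1.level = y.1.level := hl' _ _
      rw [← hx]
      exact (mem_code.1 (hn ⟨x.1, (mem_code.1 x.2).1⟩ (hs _ hx.le))).2
    let x := (e n).symm ⟨y.1, mem_code.2 ⟨y.2, hyn⟩⟩
    have hx : x.1.level = y.1.level := hl' _ _
    refine ⟨⟨x.1, (mem_code.1 x.2).1⟩, Subtype.ext ((h _ (hs _ hx.le)).trans ?_)⟩
    exact congrArg Subtype.val ((e n).apply_symm_apply _)
  refine PreservesComp.topIso (χ := Equiv.ofBijective F ⟨hinj, hsurj⟩) G.2.2 H.2.2 G.1.2 H.1.2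
    fun x y z => ?_
  classical
  obtain ⟨n, hn, h⟩ := key {x, y, z}
  change _ ↔ MorCode.Comp (χ x).1 (χ y).1 (χ z).1
  rw [h x (by simp), h y (by simp), h z (by simp), ← hcomp]

/-- **Main Theorem.** The topological isomorphism relation on the space of
oligomorphic closed subgroups of `Sym(ω)` whose canonical structure has weak elimination
of imaginaries is smooth: there is a Borel map to a standard Borel space such that two
such groups are topologically isomorphic iff their images are equal. -/
theorem stmt_0 :
    ∃ (Y : Type) (mY : MeasurableSpace Y) (f : OligWEISpace → Y),
      @StandardBorelSpace Y mY ∧ @Measurable OligWEISpace Y _ mY f ∧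
      ∀ G H : OligWEISpace, TopIso G.1.1 H.1.1 ↔ f G = f H := by
  let : MeasurableSpace (Quotient codeSetoid) := ⊤
  have : DiscreteMeasurableSpace (Quotient codeSetoid) := ⟨fun _ => trivial⟩
  refine ⟨ℕ → Quotient codeSetoid, inferInstance, fun G n => ⟦code G n⟧, inferInstance,
    measurable_pi_iff.2 fun n => ?_, fun G H => ?_⟩
  · exact (measurable_from_top (f := Quotient.mk codeSetoid)).comp (measurable_code n)
  · simp only [funext_iff, Quotient.eq]
    exact ⟨TopIso.code_equiv, topIso_of_code_equiv⟩

end Paper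
end

section
/- Let (ℚ, <) be the countable dense linear order without endpoints. Then Aut(Aut(ℚ)) ≅ Aut(ℚ) ⋊ ℤ/2ℤ, i.e., the group of abstract group automorphisms of the group of order automorphisms of ℚ is isomorphic to the semidirect product of Aut(ℚ) (acting by inner automorphisms) with a group of order 2 (generated by the automorphism induced by conjugation by the order-reversing map q ↦ -q). -/
theorem exists_orderIso_of_strictMono_surjective {f : ℚ → ℚ} (hf : StrictMono f)
    (hs : Function.Surjective f) : ∃ g : ℚ ≃o ℚ, ∀ x, g x = f x :=
  ⟨hf.orderIsoOfSurjective f hs, fun _ => rfl⟩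

section Translation

/-- Translation by one. -/
def shift : ℚ ≃o ℚ := OrderIso.addRight 1

theorem shift_apply (x : ℚ) : shift x = x + 1 := rfl

theorem exists_conj_shift (s : ℚ ≃o ℚ) (hs : ∀ x, x + 1 ≤ s x) :
    ∃ v : ℚ ≃o ℚ, v * shift * v⁻¹ = s := by
  have hc : (0 : ℚ) < s 0 := by linarith [hs 0]
  have hstep : ∀ (n : ℤ) x, (s ^ (n + 1)) x = (s ^ n) (s x) := fun n x => by
    rw [zpow_add_one]; rfl
  have hmono : StrictMono fun n : ℤ => (s ^ n) 0 :=
    strictMono_int_of_lt_succ fun n => by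
      simp only [hstep]
      exact (s ^ n).strictMono hc
  have hup : ∀ n : ℕ, (n : ℚ) ≤ (s ^ (n : ℤ)) 0 := by
    intro n
    induction n with
    | zero => simp
    | succ n ih =>
      push_cast
      rw [add_comm (n : ℤ), zpow_add, zpow_one]
      exact (add_le_add_left ih 1).trans (hs _)
  have hdown : ∀ n : ℕ, (s ^ (-(n : ℤ))) 0 ≤ -(n : ℚ) := by
    intro n
    induction n with
    | zero => simp
    | succ n ih =>
      have h : (s ^ (-(n : ℤ))) 0 = s ((s ^ (-((n + 1 : ℕ) : ℤ))) 0) := by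
        rw [← RelIso.mul_apply, ← zpow_one_add]
        congr 3
        push_cast
        ring
      have := hs ((s ^ (-((n + 1 : ℕ) : ℤ))) 0)
      push_cast at *
      linarith
  let f : ℚ → ℚ := fun y => (s ^ ⌊y⌋) (s 0 * Int.fract y)
  have hlow : ∀ y, (s ^ ⌊y⌋) 0 ≤ f y := fun y =>
    (s ^ ⌊y⌋).monotone (mul_nonneg hc.le (Int.fract_nonneg y))
  have hhigh : ∀ y, f y < (s ^ (⌊y⌋ + 1)) 0 := fun y => by
    rw [hstep]
    exact (s ^ ⌊y⌋).strictMono (by nlinarith [Int.fract_lt_one y])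
  have hf : StrictMono f := by
    intro y z hyz
    rcases (Int.floor_mono hyz.le).eq_or_lt with h | h
    · simp only [f, h]
      refine (s ^ ⌊z⌋).strictMono (mul_lt_mul_of_pos_left ?_ hc)
      rw [Int.fract, Int.fract, h]
      linarith
    · exact (hhigh y).trans_le ((hmono.monotone (Int.add_one_le_iff.2 h)).trans (hlow z))
  have hsurj : Function.Surjective f := by
    intro x
    obtain ⟨N, hN⟩ := exists_nat_gt |x|
    obtain ⟨h1, h2⟩ := abs_lt.1 hN
    obtain ⟨n, hn, hmax⟩ := Int.exists_greatest_of_bdd (P := fun n : ℤ => (s ^ n) 0 ≤ x)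
      ⟨N, fun z hz => hmono.le_iff_le.1 (hz.trans (h2.le.trans (hup N)))⟩
      ⟨-N, (hdown N).trans h1.le⟩
    have hlt : x < (s ^ (n + 1)) 0 := by
      by_contra h
      have := hmax (n + 1) (not_lt.1 h)
      omega
    have hu : (s ^ n) ((s ^ n)⁻¹ x) = x := RelIso.apply_inv_self _ x
    set u := (s ^ n)⁻¹ x
    have hu0 : 0 ≤ u := (s ^ n).le_iff_le.1 (by rwa [hu])
    have hu1 : u < s 0 := (s ^ n).lt_iff_lt.1 (by rwa [hu, ← hstep])
    have hq0 : 0 ≤ u / s 0 := div_nonneg hu0 hc.le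
    have hq1 : u / s 0 < 1 := (div_lt_one hc).2 hu1
    refine ⟨n + u / s 0, ?_⟩
    have hfl : ⌊u / s 0⌋ = 0 := Int.floor_eq_zero_iff.2 ⟨hq0, hq1⟩
    simp only [f, Int.floor_intCast_add, hfl, add_zero, Int.fract, add_sub_cancel_left]
    rw [mul_div_cancel₀ _ hc.ne', hu]
  obtain ⟨v, hv⟩ := exists_orderIso_of_strictMono_surjective hf hsurj
  refine ⟨v, mul_inv_eq_iff_eq_mul.2 (RelIso.ext fun x => ?_)⟩
  simp only [RelIso.mul_apply, shift_apply, hv, f, Int.floor_add_one, Int.fract_add_one]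
  rw [add_comm, zpow_add, zpow_one, RelIso.mul_apply]

theorem normalClosure_shift : Subgroup.normalClosure {shift} = ⊤ := by
  have key : ∀ s : ℚ ≃o ℚ, (∀ x, x + 1 ≤ s x) → s ∈ Subgroup.normalClosure {shift} := by
    intro s hs
    obtain ⟨v, rfl⟩ := exists_conj_shift s hs
    exact Subgroup.normalClosure_normal.conj_mem _ (Subgroup.subset_normalClosure (Set.mem_singleton _)) v
  refine (Subgroup.eq_top_iff' _).2 fun g => ?_
  have hm : StrictMono fun x => max x (g⁻¹ x) + 1 := fun x y h => by
    have := g⁻¹.strictMono h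
    simp only
    gcongr
    exact max_lt_max h this
  have hs : Function.Surjective fun x => max x (g⁻¹ x) + 1 := by
    intro z
    rcases le_total (g (z - 1)) (z - 1) with h | h
    · refine ⟨g (z - 1), ?_⟩
      simp [h]
    · refine ⟨z - 1, ?_⟩
      have : g⁻¹ (z - 1) ≤ z - 1 := by
        rw [← g.le_iff_le, RelIso.apply_inv_self]; exact h
      simp [this]
  obtain ⟨t, ht⟩ := exists_orderIso_of_strictMono_surjective hm hs
  have h1 : t ∈ Subgroup.normalClosure {shift} := key t fun x => by
    rw [ht]; gcongr; exact le_max_left _ _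
  have h2 : t * g ∈ Subgroup.normalClosure {shift} := key _ fun x => by
    rw [RelIso.mul_apply, ht, RelIso.inv_apply_self]; gcongr; exact le_max_right _ _
  simpa using mul_mem (inv_mem h1) h2

/-- Dilation by two about `p`. -/
noncomputable def dilation (p : ℚ) : ℚ ≃o ℚ :=
  StrictMono.orderIsoOfSurjective (fun x => p + 2 * (x - p))
    (fun x y h => by simp only; linarith) (fun z => ⟨p + (z - p) / 2, by ring⟩)

theorem dilation_apply (p x : ℚ) : dilation p x = p + 2 * (x - p) := rfl

theorem dilation_apply_self (p : ℚ) : dilation p p = p := by simp [dilation_apply]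

theorem dilation_apply_eq_self {p x : ℚ} : dilation p x = x → x = p := by
  rw [dilation_apply]; intro h; linarith

theorem dilation_conj_shift :
    dilation 0 * shift⁻¹ * (dilation 0)⁻¹ * shift = shift⁻¹ := by
  have : dilation 0 * shift = shift * shift * dilation 0 := RelIso.ext fun x => by
    simp only [RelIso.mul_apply, shift_apply, dilation_apply]; ring
  have h2 : dilation 0 * shift * (dilation 0)⁻¹ = shift * shift := by rw [this]; group
  have h3 : dilation 0 * shift⁻¹ * (dilation 0)⁻¹ = (shift * shift)⁻¹ := by rw [← h2]; group
  rw [h3]; group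

end Translation

section Power

theorem exists_block_surjective (K : Subgroup (ℚ × ℕ → ℚ ≃o ℚ)) (c : (ℚ × ℕ → ℚ ≃o ℚ) → ℚ)
    (hc : ∀ g g', c g = c g' → g⁻¹ * g' ∈ K) :
    ∃ q : ℚ, ∀ g : ℕ → ℚ ≃o ℚ, ∃ κ ∈ K, ∀ k, κ (q, k) = g k := by
  by_contra! hcon
  choose g hg using hcon
  have : ∀ q, ∃ z, (∃ z', c z' = q) → c z = q := fun q => by
    by_cases h : ∃ z', c z' = q
    · exact ⟨h.choose, fun _ => h.choose_spec⟩
    · exact ⟨1, fun h' => absurd h' h⟩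
  choose z hz using this
  let w : ℚ × ℕ → ℚ ≃o ℚ := fun i => z i.1 i * g i.1 i.2
  obtain ⟨k, hk⟩ := hg (c w) _ (hc (z (c w)) w (hz _ ⟨w, rfl⟩))
  exact hk (by simp [w])

theorem exists_mulSingle_mem (K : Subgroup (ℚ × ℕ → ℚ ≃o ℚ)) (c : (ℚ × ℕ → ℚ ≃o ℚ) → ℚ)
    (hc : ∀ g g', c g = c g' → g⁻¹ * g' ∈ K) :
    ∃ i, ∀ g : ℚ ≃o ℚ, Pi.mulSingle i g ∈ K := by
  classical
  obtain ⟨q, hq⟩ := exists_block_surjective K c hc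
  let τ : Set ℕ → ℚ × ℕ → ℚ ≃o ℚ := fun S i => if i.1 = q ∧ i.2 ∈ S then shift else 1
  have hdiff : ∃ S T : Set ℕ, (∃ k ∈ S, k ∉ T) ∧ (τ S)⁻¹ * τ T ∈ K := by
    by_contra! hcon
    have hinj : Function.Injective fun S => c (τ S) := by
      intro S T h
      refine Set.Subset.antisymm (fun k hk => ?_) (fun k hk => ?_)
      · by_contra hkT
        exact hcon S T ⟨k, hk, hkT⟩ (hc _ _ h)
      · by_contra hkS
        exact hcon T S ⟨k, hk, hkS⟩ (hc _ _ h.symm)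
    obtain ⟨e⟩ : Nonempty (ℚ ≃ ℕ) := ⟨Denumerable.eqv ℚ⟩
    exact Function.cantor_injective _ (e.injective.comp hinj)
  obtain ⟨S, T, ⟨k, hkS, hkT⟩, hw⟩ := hdiff
  have hlift : ∀ u : ℚ ≃o ℚ, ∃ κ ∈ K, κ (q, k) = u ∧ ∀ j, j ≠ k → κ (q, j) = 1 := by
    intro u
    obtain ⟨κ, hκ, h⟩ := hq (Pi.mulSingle k u)
    exact ⟨κ, hκ, by simp [h], fun j hj => by simp [h, hj]⟩
  have hshift : Pi.mulSingle (q, k) shift⁻¹ ∈ K := by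
    obtain ⟨κ, hκ, hk, hj⟩ := hlift (dilation 0)
    convert mul_mem (mul_mem (mul_mem hκ hw) (inv_mem hκ)) (inv_mem hw) using 1
    funext ⟨p, j⟩
    by_cases hp : p = q
    · subst hp
      by_cases hjk : j = k
      · subst hjk
        simp [τ, hk, hkS, hkT, dilation_conj_shift]
      · simp [hjk, hj j hjk]
    · simp [τ, hp]
  refine ⟨(q, k), fun g => ?_⟩
  have hg : g ∈ Subgroup.normalClosure {shift} := normalClosure_shift ▸ Subgroup.mem_top g
  have hnormal : (K.comap (MonoidHom.mulSingle (fun _ => ℚ ≃o ℚ) (q, k))).Normal := by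
    refine ⟨fun n hn v => ?_⟩
    obtain ⟨κ, hκ, hk, hj⟩ := hlift v
    have : Pi.mulSingle (q, k) n ∈ K := hn
    change Pi.mulSingle (q, k) (v * n * v⁻¹) ∈ K
    convert mul_mem (mul_mem hκ this) (inv_mem hκ) using 1
    funext i
    by_cases hi : i = (q, k)
    · subst hi
      simp [hk]
    · simp [hi]
  refine Subgroup.normalClosure_le_normal (N := K.comap (MonoidHom.mulSingle (fun _ => ℚ ≃o ℚ) (q, k)))
    (Set.singleton_subset_iff.2 ?_) hg
  simpa [← Pi.mulSingle_inv] using inv_mem hshift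

end Power

section Support

/-- `g` fixes every point outside the open interval `(a, b)`. -/
def SupportedOn (a b : ℚ) (g : ℚ ≃o ℚ) : Prop :=
  ∀ x, x ∉ Set.Ioo a b → g x = x

theorem SupportedOn.inv {a b : ℚ} {g : ℚ ≃o ℚ} (hg : SupportedOn a b g) :
    SupportedOn a b g⁻¹ := fun x hx => by
  conv_lhs => rw [← hg x hx]
  exact RelIso.inv_apply_self g x

theorem SupportedOn.apply_mem {a b : ℚ} {g : ℚ ≃o ℚ} (hg : SupportedOn a b g) {x : ℚ}
    (hx : x ∈ Set.Ioo a b) : g x ∈ Set.Ioo a b := by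
  by_contra h
  exact h (by rwa [g.injective (hg _ h)])

theorem SupportedOn.conj {a b : ℚ} {g : ℚ ≃o ℚ} (hg : SupportedOn a b g) (k : ℚ ≃o ℚ) :
    SupportedOn (k a) (k b) (k * g * k⁻¹) := fun x hx => by
  have : k⁻¹ x ∉ Set.Ioo a b := fun h => hx (by
    simpa using And.intro (k.strictMono h.1) (k.strictMono h.2))
  simp [hg _ this]

theorem exists_supportedOn_ne_one : ∃ g : ℚ ≃o ℚ, SupportedOn 0 1 g ∧ g ≠ 1 := by
  have hm : StrictMono fun x : ℚ => max x (min (2 * x) ((x + 1) / 2)) := fun x y h =>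
    max_lt_max h (min_lt_min (by linarith) (by linarith))
  have hs : Function.Surjective fun x : ℚ => max x (min (2 * x) ((x + 1) / 2)) := fun y => by
    refine ⟨min y (max (y / 2) (2 * y - 1)), ?_⟩
    grind
  obtain ⟨g, hg⟩ := exists_orderIso_of_strictMono_surjective hm hs
  refine ⟨g, fun x hx => ?_, fun h => ?_⟩
  · rw [hg]
    grind
  · have := hg (1 / 2)
    rw [h] at this
    norm_num at this

/-- Independent order automorphisms of pairwise disjoint open intervals can be combined. -/
theorem exists_glue {ι : Type*} [DecidableEq ι] (a b : ι → ℚ) (hab : ∀ i, a i < b i)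
    (hdisj : ∀ i j x, x ∈ Set.Ioo (a i) (b i) → x ∈ Set.Ioo (a j) (b j) → i = j) :
    ∃ Φ : (ι → ℚ ≃o ℚ) →* (ℚ ≃o ℚ), ∀ i g, SupportedOn (a i) (b i) g →
      ∃ f, Φ (Pi.mulSingle i f) = g := by
  classical
  have he : ∀ i, Nonempty (ℚ ≃o Set.Ioo (a i) (b i)) := fun i => by
    have := Set.nonempty_Ioo_subtype (hab i)
    exact Order.iso_of_countable_dense _ _
  let e := fun i => (he i).some
  have hcases : ∀ x, (∃ i y, x = (e i y : ℚ)) ∨ ∀ i, x ∉ Set.Ioo (a i) (b i) := fun x => by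
    by_cases h : ∃ i, x ∈ Set.Ioo (a i) (b i)
    · obtain ⟨i, hi⟩ := h
      exact Or.inl ⟨i, (e i).symm ⟨x, hi⟩, by simp⟩
    · exact Or.inr (not_exists.1 h)
  let F : (ι → ℚ ≃o ℚ) → ℚ → ℚ := fun g x =>
    if h : ∃ i, x ∈ Set.Ioo (a i) (b i) then
      e h.choose (g h.choose ((e h.choose).symm ⟨x, h.choose_spec⟩)) else x
  have hin : ∀ g i y, F g (e i y) = e i (g i y) := fun g i y => by
    have h : ∃ j, (e i y : ℚ) ∈ Set.Ioo (a j) (b j) := ⟨i, (e i y).2⟩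
    have hi : h.choose = i := hdisj _ _ _ h.choose_spec (e i y).2
    have key : ∀ j (hj : (e i y : ℚ) ∈ Set.Ioo (a j) (b j)), j = i →
        (e j (g j ((e j).symm ⟨e i y, hj⟩)) : ℚ) = e i (g i y) := by
      rintro j hj rfl
      simp
    simp only [F, dif_pos h]
    exact key _ _ hi
  have hout : ∀ g x, (∀ i, x ∉ Set.Ioo (a i) (b i)) → F g x = x := fun g x hx => by
    simp only [F, dif_neg (not_exists.2 hx)]
  have hmul : ∀ g h x, F (g * h) x = F g (F h x) := fun g h x => by
    rcases hcases x with ⟨i, y, rfl⟩ | hx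
    · simp [hin]
    · simp [hout _ _ hx]
  have hone : ∀ x, F 1 x = x := fun x => by
    rcases hcases x with ⟨i, y, rfl⟩ | hx
    · simp [hin]
    · exact hout _ _ hx
  have hmono : ∀ g, StrictMono (F g) := fun g x y hxy => by
    rcases hcases x with ⟨i, u, rfl⟩ | hx <;> rcases hcases y with ⟨j, v, rfl⟩ | hy
    · rw [hin, hin]
      by_cases hij : i = j
      · subst hij
        simpa using hxy
      · have hi := (e i u).2
        have hj := (e j v).2
        have hi' := (e i (g i u)).2
        have hj' := (e j (g j v)).2
        simp only [Set.mem_Ioo] at hi hj hi' hj'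
        have : b i ≤ a j := by
          by_contra! hlt
          obtain ⟨z, hz1, hz2⟩ := exists_between
            (max_lt (lt_min hi.2 hxy) (lt_min hlt hj.1))
          rw [max_lt_iff] at hz1
          rw [lt_min_iff] at hz2
          exact hij (hdisj i j z ⟨hi.1.trans hz1.1, hz2.1⟩ ⟨hz1.2, hz2.2.trans hj.2⟩)
        linarith
    · rw [hin, hout g y hy]
      have hi := (e i u).2
      have hi' := (e i (g i u)).2
      by_contra! h
      exact hy i ⟨hi.1.trans hxy, h.trans_lt hi'.2⟩
    · rw [hin, hout g x hx]
      have hj := (e j v).2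
      have hj' := (e j (g j v)).2
      by_contra! h
      exact hx j ⟨hj'.1.trans_le h, hxy.trans hj.2⟩
    · rwa [hout g x hx, hout g y hy]
  have hsurj : ∀ g, Function.Surjective (F g) := fun g z =>
    ⟨F g⁻¹ z, by rw [← hmul, mul_inv_cancel, hone]⟩
  refine ⟨MonoidHom.mk' (fun g => (hmono g).orderIsoOfSurjective (F g) (hsurj g))
    fun g h => RelIso.ext (hmul g h), fun i g hg => ?_⟩
  have hφ : StrictMono fun y => (e i).symm ⟨g (e i y), hg.apply_mem (e i y).2⟩ := fun y z h => by
    simpa using h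
  obtain ⟨f, hf⟩ := exists_orderIso_of_strictMono_surjective hφ fun z =>
    ⟨(e i).symm ⟨g⁻¹ (e i z), hg.inv.apply_mem (e i z).2⟩, by simp⟩
  refine ⟨f, RelIso.ext fun x => ?_⟩
  change F (Pi.mulSingle i f) x = g x
  rcases hcases x with ⟨j, y, rfl⟩ | hx
  · rw [hin]
    by_cases hij : j = i
    · subst hij
      simp [hf]
    · rw [hg _ fun h => hij (hdisj _ _ _ (e j y).2 h)]
      simp [hij]
  · rw [hout _ _ hx, hg x (hx i)]

end Support

section CountableIndex

theorem exists_supportedOn_subset (H : Subgroup (ℚ ≃o ℚ)) (c : (ℚ ≃o ℚ) → ℚ)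
    (hc : ∀ g g', c g = c g' → g⁻¹ * g' ∈ H) (a b : ℕ → ℚ) (hab : ∀ i, a i < b i)
    (hdisj : ∀ i j x, x ∈ Set.Ioo (a i) (b i) → x ∈ Set.Ioo (a j) (b j) → i = j) :
    ∃ i, ∀ g, SupportedOn (a i) (b i) g → g ∈ H := by
  let ε : ℚ × ℕ ≃ ℕ := Denumerable.eqv _
  obtain ⟨Φ, hΦ⟩ := exists_glue (fun i => a (ε i)) (fun i => b (ε i)) (fun i => hab _)
    fun i j x hi hj => ε.injective (hdisj _ _ x hi hj)
  obtain ⟨i, hi⟩ := exists_mulSingle_mem (H.comap Φ) (fun g => c (Φ g)) fun g g' h => by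
    simpa using hc _ _ h
  refine ⟨ε i, fun g hg => ?_⟩
  obtain ⟨f, rfl⟩ := hΦ i g hg
  exact hi f

theorem exists_invariant_lowerSet (H : Subgroup (ℚ ≃o ℚ)) (c : (ℚ ≃o ℚ) → ℚ)
    (hc : ∀ g g', c g = c g' → g⁻¹ * g' ∈ H)
    (hH : ∃ a b g, SupportedOn a b g ∧ g ∉ H) :
    ∃ L : Set ℚ, IsLowerSet L ∧ L.Nonempty ∧ Lᶜ.Nonempty ∧ ∀ h ∈ H, ∀ x ∈ L, h x ∈ L := by
  refine ⟨{b | ∀ a g, SupportedOn a b g → g ∈ H}, ?_, ?_, ?_, ?_⟩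
  · intro b b' hb h a g hg
    exact h a g fun x hx => hg x fun hx' => hx ⟨hx'.1, hx'.2.trans_le hb⟩
  · by_contra hempty
    have : ∀ b, ∃ a, a < b ∧ ∃ g, SupportedOn a b g ∧ g ∉ H := by
      intro b
      have hb := Set.eq_empty_iff_forall_notMem.1 (Set.not_nonempty_iff_eq_empty.1 hempty) b
      simp only [Set.mem_ofPred_eq, not_forall] at hb
      obtain ⟨a, g, hg, hgH⟩ := hb
      refine ⟨a, not_le.1 fun hba => hgH ?_, g, hg, hgH⟩
      have : g = 1 := RelIso.ext fun x => hg x (by simp [Set.Ioo_eq_empty (not_lt.2 hba)])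
      rw [this]
      exact one_mem H
    choose A hA g hg hgH using this
    let B : ℕ → ℚ := fun n => A^[n] 0
    have hB : ∀ n, B (n + 1) = A (B n) := fun n => Function.iterate_succ_apply' A n 0
    have hanti : StrictAnti B := strictAnti_nat_of_succ_lt fun n => by
      rw [hB]
      exact hA _
    have hsep : ∀ i j x, x ∈ Set.Ioo (A (B i)) (B i) → x ∈ Set.Ioo (A (B j)) (B j) →
        ¬ i < j := by
      intro i j x hi hj hij
      have := hanti.antitone (Nat.succ_le_of_lt hij)
      rw [Nat.succ_eq_add_one, hB] at this
      exact absurd (hi.1.trans hj.2) (not_lt.2 this)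
    obtain ⟨n, hn⟩ := exists_supportedOn_subset H c hc (fun n => A (B n)) B (fun n => hA _)
      fun i j x hi hj => le_antisymm (not_lt.1 (hsep j i x hj hi)) (not_lt.1 (hsep i j x hi hj))
    exact hgH _ (hn _ (hg (B n)))
  · obtain ⟨a, b, g, hg, hgH⟩ := hH
    exact ⟨b, fun h => hgH (h a g hg)⟩
  · intro h hh b hb a g hg
    have := hb _ _ (by simpa using hg.conj h⁻¹)
    simpa [mul_assoc] using mul_mem (mul_mem hh this) (inv_mem hh)

/-- A Dedekind cut of the rationals, given by its lower part, that no rational realizes. -/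
structure IsGap (L : Set ℚ) : Prop where
  isLowerSet : IsLowerSet L
  nonempty : L.Nonempty
  compl_nonempty : Lᶜ.Nonempty
  exists_gt : ∀ x ∈ L, ∃ y ∈ L, x < y
  exists_lt : ∀ x ∈ Lᶜ, ∃ y ∈ Lᶜ, y < x

theorem IsGap.nonempty_orderIso {L M : Set ℚ} (hL : IsGap L) (hM : IsGap M) :
    Nonempty (L ≃o M) := by
  have inst : ∀ {L : Set ℚ}, IsGap L →
      DenselyOrdered L ∧ NoMinOrder L ∧ NoMaxOrder L ∧ Nonempty L := by
    intro L hL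
    have := hL.isLowerSet.ordConnected
    refine ⟨inferInstance, ⟨fun x => ?_⟩, ⟨fun x => ?_⟩, hL.nonempty.to_subtype⟩
    · exact ⟨⟨x - 1, hL.isLowerSet (by linarith) x.2⟩, Subtype.coe_lt_coe.1 (by simp)⟩
    · obtain ⟨y, hy, h⟩ := hL.exists_gt x x.2
      exact ⟨⟨y, hy⟩, h⟩
  obtain ⟨_, _, _, _⟩ := inst hL
  obtain ⟨_, _, _, _⟩ := inst hM
  exact Order.iso_of_countable_dense L M

theorem IsGap.nonempty_compl_orderIso {L M : Set ℚ} (hL : IsGap L) (hM : IsGap M) :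
    Nonempty ((Lᶜ : Set ℚ) ≃o (Mᶜ : Set ℚ)) := by
  have inst : ∀ {L : Set ℚ}, IsGap L → DenselyOrdered (Lᶜ : Set ℚ) ∧
      NoMinOrder (Lᶜ : Set ℚ) ∧ NoMaxOrder (Lᶜ : Set ℚ) ∧ Nonempty (Lᶜ : Set ℚ) := by
    intro L hL
    have := hL.isLowerSet.compl.ordConnected
    refine ⟨inferInstance, ⟨fun x => ?_⟩, ⟨fun x => ?_⟩, hL.compl_nonempty.to_subtype⟩
    · obtain ⟨y, hy, h⟩ := hL.exists_lt x x.2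
      exact ⟨⟨y, hy⟩, h⟩
    · exact ⟨⟨x + 1, hL.isLowerSet.compl (by linarith) x.2⟩, Subtype.coe_lt_coe.1 (by simp)⟩
  obtain ⟨_, _, _, _⟩ := inst hL
  obtain ⟨_, _, _, _⟩ := inst hM
  exact Order.iso_of_countable_dense (Lᶜ : Set ℚ) (Mᶜ : Set ℚ)

theorem IsGap.exists_orderIso {L M : Set ℚ} (hL : IsGap L) (hM : IsGap M) :
    ∃ g : ℚ ≃o ℚ, ∀ x, x ∈ L ↔ g x ∈ M := by
  classical
  obtain ⟨e⟩ := hL.nonempty_orderIso hM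
  obtain ⟨e'⟩ := hL.nonempty_compl_orderIso hM
  let f : ℚ → ℚ := fun x => if h : x ∈ L then e ⟨x, h⟩ else e' ⟨x, h⟩
  have hpos : ∀ x (h : x ∈ L), f x = e ⟨x, h⟩ := fun x h => by simp [f, h]
  have hneg : ∀ x (h : x ∈ Lᶜ), f x = e' ⟨x, h⟩ := fun x h => dif_neg h
  have hmono : StrictMono f := by
    intro x y hxy
    by_cases hx : x ∈ L <;> by_cases hy : y ∈ L
    · rw [hpos x hx, hpos y hy]
      simpa using hxy
    · rw [hpos x hx, hneg y hy]
      by_contra! h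
      exact (e' ⟨y, hy⟩).2 (hM.isLowerSet h (e ⟨x, hx⟩).2)
    · exact absurd (hL.isLowerSet hxy.le hy) hx
    · rw [hneg x hx, hneg y hy]
      simpa using hxy
  have hsurj : Function.Surjective f := by
    intro z
    by_cases hz : z ∈ M
    · exact ⟨e.symm ⟨z, hz⟩, by rw [hpos _ (e.symm ⟨z, hz⟩).2]; simp⟩
    · exact ⟨e'.symm ⟨z, hz⟩, by rw [hneg _ (e'.symm ⟨z, hz⟩).2]; simp⟩
  obtain ⟨g, hg⟩ := exists_orderIso_of_strictMono_surjective hmono hsurj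
  refine ⟨g, fun x => ?_⟩
  rw [hg]
  by_cases hx : x ∈ L
  · simp [hpos x hx, hx]
  · simp only [hneg x hx, hx, false_iff]
    exact (e' ⟨x, hx⟩).2

theorem Irrational.isGap {r : ℝ} (hr : Irrational r) : IsGap {x : ℚ | (x : ℝ) < r} where
  isLowerSet x y h hx := by
    simp only [Set.mem_ofPred_eq] at *
    exact lt_of_le_of_lt (by exact_mod_cast h) hx
  nonempty := exists_rat_lt r
  compl_nonempty := by
    obtain ⟨q, hq⟩ := exists_rat_gt r
    exact ⟨q, not_lt.2 hq.le⟩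
  exists_gt x hx := by
    simp only [Set.mem_ofPred_eq] at *
    obtain ⟨q, h1, h2⟩ := exists_rat_btwn hx
    exact ⟨q, h2, by exact_mod_cast h1⟩
  exists_lt x hx := by
    simp only [Set.mem_compl_iff, Set.mem_ofPred_eq, not_lt] at *
    obtain ⟨q, h1, h2⟩ := exists_rat_btwn (lt_of_le_of_ne hx (hr.ne_rat x))
    exact ⟨q, h1.le, by exact_mod_cast h2⟩

theorem not_injective_irrational (f : {r : ℝ // Irrational r} → ℚ) : ¬ Function.Injective f := by
  intro hf
  have h1 : {r : ℝ | Irrational r}.Countable := hf.countable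
  have h2 : (Set.range ((↑) : ℚ → ℝ)).Countable := Set.countable_range _
  refine Set.not_countable_univ (α := ℝ) ((h1.union h2).mono fun r _ => ?_)
  exact (em (Irrational r)).imp id not_not.1

/-- A gap has uncountably many translates, so it is not preserved by a subgroup of countable
index. -/
theorem not_isGap_of_invariant (H : Subgroup (ℚ ≃o ℚ)) (c : (ℚ ≃o ℚ) → ℚ)
    (hc : ∀ g g', c g = c g' → g⁻¹ * g' ∈ H) {L : Set ℚ}
    (hL : ∀ h ∈ H, ∀ x ∈ L, h x ∈ L) : ¬ IsGap L := by
  intro hgap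
  choose g hg using fun r : {r : ℝ // Irrational r} => hgap.exists_orderIso r.2.isGap
  refine not_injective_irrational (fun r => c (g r)) fun r s hrs => ?_
  have key : ∀ r s, c (g r) = c (g s) → s.1 ≤ r.1 := by
    intro r s h
    by_contra! hlt
    obtain ⟨q, h1, h2⟩ := exists_rat_btwn hlt
    have hq : (g s)⁻¹ q ∈ L := (hg s _).2 (by simpa using h2)
    have := (hg r _).1 (hL _ (hc _ _ h) _ hq)
    simp only [RelIso.mul_apply, RelIso.apply_inv_self, Set.mem_ofPred_eq] at this
    exact absurd this (not_lt.2 h1.le)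
  exact Subtype.ext (le_antisymm (key s r hrs.symm) (key r s hrs))

theorem exists_fixed_of_countable_index (H : Subgroup (ℚ ≃o ℚ)) (c : (ℚ ≃o ℚ) → ℚ)
    (hc : ∀ g g', c g = c g' → g⁻¹ * g' ∈ H)
    (hH : ∃ a b g, SupportedOn a b g ∧ g ∉ H) : ∃ p, ∀ h ∈ H, h p = p := by
  obtain ⟨L, hlow, hne, hcne, hinv⟩ := exists_invariant_lowerSet H c hc hH
  have hinv' : ∀ h ∈ H, ∀ x ∈ Lᶜ, h x ∈ Lᶜ := fun h hh x hx hx' =>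
    hx (by simpa using hinv _ (inv_mem hh) _ hx')
  have fixed : ∀ p, (∀ h ∈ H, h p ≤ p) → ∀ h ∈ H, h p = p := fun p hp h hh =>
    le_antisymm (hp h hh) (by simpa using h.monotone (hp _ (inv_mem hh)))
  have fixed' : ∀ p, (∀ h ∈ H, p ≤ h p) → ∀ h ∈ H, h p = p := fun p hp h hh =>
    le_antisymm (by simpa using h.monotone (hp _ (inv_mem hh))) (hp h hh)
  by_contra hcon
  refine not_isGap_of_invariant H c hc hinv ⟨hlow, hne, hcne, fun x hx => ?_, fun x hx => ?_⟩
  · by_contra! h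
    exact hcon ⟨x, fixed x fun k hk => h _ (hinv k hk x hx)⟩
  · by_contra! h
    exact hcon ⟨x, fixed' x fun k hk => h _ (hinv' k hk x hx)⟩

end CountableIndex

section Reconstruction

/-- The stabilizer of a rational point. -/
def pointStabilizer (q : ℚ) : Subgroup (ℚ ≃o ℚ) where
  carrier := {g | g q = q}
  one_mem' := rfl
  mul_mem' {f _} hf hg := (congrArg f hg).trans hf
  inv_mem' {f} hf := (congrArg (f⁻¹ : ℚ ≃o ℚ) hf).symm.trans (RelIso.inv_apply_self f q)

theorem exists_orderIso_apply_eq (x y : ℚ) : ∃ g : ℚ ≃o ℚ, g x = y :=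
  ⟨OrderIso.addRight (y - x), by simp⟩

theorem exists_fixed_of_mulAut (α : MulAut (ℚ ≃o ℚ)) (q : ℚ) :
    ∃ p, ∀ g, g q = q → α g p = p := by
  let H := (pointStabilizer q).comap (α⁻¹ : MulAut (ℚ ≃o ℚ)).toMonoidHom
  have hmem : ∀ g, g ∈ H ↔ α⁻¹ g q = q := fun _ => Iff.rfl
  have hindex : ∀ g g', α⁻¹ g q = α⁻¹ g' q → g⁻¹ * g' ∈ H := by
    intro g g' h
    rw [hmem, map_mul, map_inv, RelIso.mul_apply, ← h, RelIso.inv_apply_self]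
  have hcore : ∃ a b g, SupportedOn a b g ∧ g ∉ H := by
    by_contra! hcon
    obtain ⟨g, hg, hg1⟩ := exists_supportedOn_ne_one
    refine hg1 ((map_eq_one_iff _ (α⁻¹ : MulAut (ℚ ≃o ℚ)).injective).1 (RelIso.ext fun x => ?_))
    obtain ⟨m, rfl⟩ := exists_orderIso_apply_eq q x
    have := (hmem _).1 (hcon _ _ _ (hg.conj (α m⁻¹)))
    simp only [map_mul, map_inv, RelIso.mul_apply, MulAut.inv_apply_self, inv_inv] at this
    simpa using congrArg m this
  obtain ⟨p, hp⟩ := exists_fixed_of_countable_index H (fun g => α⁻¹ g q) hindex hcore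
  exact ⟨p, fun g hg => hp _ ((hmem _).2 (by rwa [MulAut.inv_apply_self]))⟩

theorem exists_perm_of_mulAut (α : MulAut (ℚ ≃o ℚ)) :
    ∃ h : Equiv.Perm ℚ, ∀ g q, α g (h q) = h (g q) := by
  choose h hh using exists_fixed_of_mulAut α
  choose k hk using exists_fixed_of_mulAut α⁻¹
  have hkh : ∀ q, k (h q) = q := fun q => dilation_apply_eq_self <| by
    simpa using hk (h q) _ (hh q _ (dilation_apply_self q))
  have hhk : ∀ q, h (k q) = q := fun q => dilation_apply_eq_self <| by
    simpa using hh (k q) _ (hk q _ (dilation_apply_self q))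
  refine ⟨⟨h, k, hkh, hhk⟩, fun g q => dilation_apply_eq_self ?_⟩
  have h1 : α⁻¹ (dilation (h (g q))) (g q) = g q := by
    simpa [hkh] using hk _ _ (dilation_apply_self (h (g q)))
  have h2 := hh q (g⁻¹ * α⁻¹ (dilation (h (g q))) * g) (by
    rw [RelIso.mul_apply, RelIso.mul_apply, h1, RelIso.inv_apply_self])
  simpa using congrArg (α g) h2

theorem exists_orderIso_zero_one {x y : ℚ} (hxy : x < y) :
    ∃ g : ℚ ≃o ℚ, g 0 = x ∧ g 1 = y := by
  have hpos : 0 < y - x := sub_pos.2 hxy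
  obtain ⟨g, hg⟩ := exists_orderIso_of_strictMono_surjective (f := fun z => x + (y - x) * z)
    (fun u v h => by simp only; gcongr)
    (fun z => ⟨(z - x) / (y - x), by field_simp; ring⟩)
  exact ⟨g, by simp [hg], by simp [hg]⟩

theorem strictMono_or_strictAnti_of_equivariant {α : MulAut (ℚ ≃o ℚ)} {h : Equiv.Perm ℚ}
    (hα : ∀ g q, α g (h q) = h (g q)) : StrictMono h ∨ StrictAnti h := by
  rcases lt_or_gt_of_ne (h.injective.ne (zero_ne_one (α := ℚ))) with h01 | h01
  · refine Or.inl fun x y hxy => ?_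
    obtain ⟨g, rfl, rfl⟩ := exists_orderIso_zero_one hxy
    rw [← hα, ← hα]
    exact (α g).strictMono h01
  · refine Or.inr fun x y hxy => ?_
    obtain ⟨g, rfl, rfl⟩ := exists_orderIso_zero_one hxy
    rw [← hα, ← hα]
    exact (α g).strictMono h01

theorem eq_self_of_commute {k : ℚ → ℚ} (hk : ∀ (g : ℚ ≃o ℚ) x, g (k x) = k (g x)) (x : ℚ) :
    k x = x :=
  dilation_apply_eq_self (by rw [hk, dilation_apply_self])

end Reconstruction

section Reflection

/-- Conjugation by the order-reversing map `q ↦ -q`. -/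
def conjNeg : MulAut (ℚ ≃o ℚ) where
  toFun g :=
    { toFun := fun x => -g (-x)
      invFun := fun x => -g.symm (-x)
      left_inv := fun x => by simp
      right_inv := fun x => by simp
      map_rel_iff' := by simp }
  invFun g :=
    { toFun := fun x => -g (-x)
      invFun := fun x => -g.symm (-x)
      left_inv := fun x => by simp
      right_inv := fun x => by simp
      map_rel_iff' := by simp }
  left_inv g := RelIso.ext fun x => by simp
  right_inv g := RelIso.ext fun x => by simp
  map_mul' f g := RelIso.ext fun x => by simp

theorem conjNeg_apply (g : ℚ ≃o ℚ) (x : ℚ) : conjNeg g x = -g (-x) := rfl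

theorem conjNeg_mul_self : conjNeg * conjNeg = 1 :=
  MulEquiv.ext fun g => RelIso.ext fun x => by simp [conjNeg_apply]

/-- The action of the group of order two generated by `conjNeg`. -/
def reflectionHom : Multiplicative (ZMod 2) →* MulAut (ℚ ≃o ℚ) where
  toFun x := if x = 1 then 1 else conjNeg
  map_one' := if_pos rfl
  map_mul' x y := by
    have hx : x = 1 ∨ x = Multiplicative.ofAdd 1 := by revert x; decide
    have hy : y = 1 ∨ y = Multiplicative.ofAdd 1 := by revert y; decide
    have h1 : (Multiplicative.ofAdd 1 : Multiplicative (ZMod 2)) ≠ 1 := by decide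
    have h2 : (Multiplicative.ofAdd 1 * Multiplicative.ofAdd 1 : Multiplicative (ZMod 2)) = 1 := by
      decide
    rcases hx with rfl | rfl <;> rcases hy with rfl | rfl <;> simp [h1, h2, conjNeg_mul_self]

theorem reflectionHom_of_ne_one {x : Multiplicative (ZMod 2)} (hx : x ≠ 1) :
    reflectionHom x = conjNeg := if_neg hx

/-- The inner automorphisms together with `conjNeg`, as a homomorphism from the semidirect
product. -/
def semidirectHom :
    SemidirectProduct (ℚ ≃o ℚ) (Multiplicative (ZMod 2)) reflectionHom →* MulAut (ℚ ≃o ℚ) :=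
  SemidirectProduct.lift MulAut.conj reflectionHom fun _ => MonoidHom.ext fun _ =>
    MulEquiv.ext fun _ => by simp

theorem semidirectHom_apply
    (a : SemidirectProduct (ℚ ≃o ℚ) (Multiplicative (ZMod 2)) reflectionHom) :
    semidirectHom a = MulAut.conj a.left * reflectionHom a.right := rfl

theorem semidirectHom_injective : Function.Injective semidirectHom := by
  refine (injective_iff_map_eq_one _).2 fun a ha => ?_
  rw [semidirectHom_apply] at ha
  have happ : ∀ g, a.left * reflectionHom a.right g * a.left⁻¹ = g := fun g => by
    simpa using DFunLike.congr_fun ha g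
  have hcomm : ∀ g, g * a.left = a.left * reflectionHom a.right g := fun g => by
    conv_lhs => rw [← happ g]
    group
  by_cases hr : a.right = 1
  · refine SemidirectProduct.ext (RelIso.ext fun x => ?_) hr
    refine eq_self_of_commute (fun g x => ?_) x
    simpa [hr] using DFunLike.congr_fun (hcomm g) x
  · exfalso
    have hfix : ∀ x, a.left (-x) = x := eq_self_of_commute fun g x => by
      simpa [reflectionHom_of_ne_one hr, conjNeg_apply] using DFunLike.congr_fun (hcomm g) (-x)
    have h0 := hfix 0
    have h1 := hfix 1
    have := a.left.strictMono (show (-1 : ℚ) < -0 by norm_num)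
    linarith

theorem semidirectHom_surjective : Function.Surjective semidirectHom := by
  intro α
  obtain ⟨h, hα⟩ := exists_perm_of_mulAut α
  rcases strictMono_or_strictAnti_of_equivariant hα with hm | hm
  · obtain ⟨k, hk⟩ := exists_orderIso_of_strictMono_surjective hm h.surjective
    refine ⟨⟨k, 1⟩, MulEquiv.ext fun g => ?_⟩
    rw [semidirectHom_apply]
    simp only [map_one, mul_one, MulAut.conj_apply]
    refine mul_inv_eq_iff_eq_mul.2 (RelIso.ext fun x => ?_)
    simp [hk, hα]
  · obtain ⟨k, hk⟩ := exists_orderIso_of_strictMono_surjective (f := fun x => h (-x))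
      (fun x y hxy => hm (neg_lt_neg hxy)) (h.surjective.comp neg_surjective)
    refine ⟨⟨k, Multiplicative.ofAdd 1⟩, MulEquiv.ext fun g => ?_⟩
    rw [semidirectHom_apply, reflectionHom_of_ne_one (show Multiplicative.ofAdd 1 ≠ 1 by decide)]
    simp only [MulAut.mul_apply, MulAut.conj_apply]
    refine mul_inv_eq_iff_eq_mul.2 (RelIso.ext fun x => ?_)
    simp [hk, hα, conjNeg_apply]

end Reflection

/-- Let `ℚ` be the countable dense linear order without endpoints. Then
`Aut(Aut(ℚ)) ≅ Aut(ℚ) ⋊ ℤ/2ℤ`: the group of abstract group automorphisms of the group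
`Aut(ℚ)` of order automorphisms of the rationals is isomorphic to a semidirect product of
`Aut(ℚ)` with a group of order `2`. -/
theorem stmt_5 :
    ∃ φ : Multiplicative (ZMod 2) →* MulAut (ℚ ≃o ℚ),
      Nonempty (MulAut (ℚ ≃o ℚ) ≃*
        SemidirectProduct (ℚ ≃o ℚ) (Multiplicative (ZMod 2)) φ) :=
  ⟨reflectionHom, ⟨(MulEquiv.ofBijective semidirectHom
    ⟨semidirectHom_injective, semidirectHom_surjective⟩).symm⟩⟩
end
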